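/- arXiv:2104.15120 — 3 statements merged into one kernel-verified Lean document; each statement's English description precedes it below -/
import Mathlib

section
/- For all integers m, n ≥ 1, setting N = m + n, there exists a sign assignment on the set F' of rectangles of the toroidal grid of size N with both endpoint generators in Σ, and any two sign assignments on F' are gauge equivalent. -/
/-- A rectangle `r(σ, i, j)` on the toroidal grid of size `N`: a flow from the
generator `σ` to the generator `σ^{ij}`. -/
structure GridRect (N : ℕ) where
  perm : Equiv.Perm (Fin N)
  i : Fin N
  j : Fin N
  hij : i ≠ j

namespace GridRect

variable {N : ℕ}

/-- The ending generator `σ^{ij}` of the rectangle `r(σ, i, j)`. -/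
def endPerm (r : GridRect N) : Equiv.Perm (Fin N) :=
  (Equiv.swap r.i r.j).trans r.perm

/-- The domain of the rectangle `r(σ,i,j)`: the indicator function of `C × R` where `C`
is the cyclic interval of columns from `i` to `j` and `R` is the cyclic interval of rows
from `σ(i)` to `σ(j)`. -/
def dom (r : GridRect N) (p : Fin N × Fin N) : ℕ :=
  if (p.1 - r.i < r.j - r.i) ∧ (p.2 - r.perm r.i < r.perm r.j - r.perm r.i) then 1 else 0

end GridRect

/-- The pairs `(r1, r2)` and `(r3, r4)` form a square: they are distinct ordered pairs,
`r1 : x → y`, `r2 : y → z`, `r3 : x → y'`, `r4 : y' → z` with `z ≠ x`, and the domains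
satisfy `D(r1) + D(r2) = D(r3) + D(r4)` pointwise. -/
def IsSquareOf {N : ℕ} (r1 r2 r3 r4 : GridRect N) : Prop :=
  (r1, r2) ≠ (r3, r4) ∧
  r3.perm = r1.perm ∧
  r2.perm = r1.endPerm ∧
  r4.perm = r3.endPerm ∧
  r4.endPerm = r2.endPerm ∧
  r2.endPerm ≠ r1.perm ∧
  ∀ p : Fin N × Fin N, r1.dom p + r2.dom p = r3.dom p + r4.dom p

/-- The set `Σ` of generators `σ` (0-indexed: columns/rows `0,…,m+n−1`) with
`σ(j) ∈ {0,…,m}` for `j < m` and `σ(j) ∈ {m−1,…,m+n−1}` for `j ≥ m`. -/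
def GenSet (m n : ℕ) : Set (Equiv.Perm (Fin (m + n))) :=
  {σ | ∀ j : Fin (m + n), ((j : ℕ) < m → (σ j : ℕ) ≤ m) ∧ (m ≤ (j : ℕ) → m ≤ (σ j : ℕ) + 1)}

/-- The set `F'` of rectangles with both endpoint generators in `Σ`. -/
def FSet (m n : ℕ) : Set (GridRect (m + n)) :=
  {r | r.perm ∈ GenSet m n ∧ r.endPerm ∈ GenSet m n}

/-- The rectangle `r(σ^{ij}, j, i)`, forming an α-degeneration with `r(σ,i,j)`. -/
def revRect {N : ℕ} (r : GridRect N) : GridRect N := ⟨r.endPerm, r.j, r.i, r.hij.symm⟩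

/-- The rectangle `r(σ^{ij}, i, j)`, forming a β-degeneration with `r(σ,i,j)`. -/
def sameRect {N : ℕ} (r : GridRect N) : GridRect N := ⟨r.endPerm, r.i, r.j, r.hij⟩

/-- A sign assignment on a set `R` of rectangles: a `{1,−1}`-valued map satisfying
(S-1), (S-2) and (S-3) whenever all rectangles involved lie in `R`. -/
def IsSignAssignment {N : ℕ} (R : Set (GridRect N)) (S : GridRect N → ℤ) : Prop :=
  (∀ r ∈ R, S r = 1 ∨ S r = -1) ∧
  (∀ r ∈ R, revRect r ∈ R → S r * S (revRect r) = 1) ∧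
  (∀ r ∈ R, sameRect r ∈ R → S r * S (sameRect r) = -1) ∧
  (∀ r1 r2 r3 r4 : GridRect N, IsSquareOf r1 r2 r3 r4 →
    r1 ∈ R → r2 ∈ R → r3 ∈ R → r4 ∈ R → S r1 * S r2 * S r3 * S r4 = -1)

/-- Gauge equivalence of two sign functions on a set `R` of rectangles. -/
def GaugeEquiv {N : ℕ} (R : Set (GridRect N)) (S S' : GridRect N → ℤ) : Prop :=
  ∃ u : Equiv.Perm (Fin N) → ℤ, (∀ σ, u σ = 1 ∨ u σ = -1) ∧
    ∀ r ∈ R, S' r = u r.perm * S r * u r.endPerm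


open Equiv in
/-- Extending a "flat" group-valued function on block transpositions by one more column. -/
lemma flat_step {N : ℕ} {H : Type*} [Group H] (b : Fin N → Bool)
    (g : Perm (Fin N) → Fin N → Fin N → H) (κ : Fin N)
    (hsymm : ∀ σ i j, i ≠ j → b i = b j → g σ i j = g σ j i)
    (hinv : ∀ σ i j, i ≠ j → b i = b j → g σ i j * g (σ * swap i j) i j = 1)
    (hC : ∀ σ i j k l, i ≠ j → b i = b j → k ≠ l → b k = b l →
      g σ i j * g (σ * swap i j) k l =
        g σ (swap i j k) (swap i j l) * g (σ * swap (swap i j k) (swap i j l)) i j)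
    (hone : ∀ σ i j, i ≠ j → b i = b j → i < κ → j < κ → g σ i j = 1) :
    ∃ v : Perm (Fin N) → H, ∀ σ i j, i ≠ j → b i = b j → i ≤ κ → j ≤ κ →
      v σ = g σ i j * v (σ * swap i j) := by
  classical
  have hA : ∀ σ k l i, k ≠ l → b k = b l → k < κ → l < κ → i < κ → b i = b κ →
      g (σ * swap k l) (swap k l i) κ = g σ i κ := by
    intro σ k l i hkl hb hk hl hi hbi
    have hbs : b (swap k l i) = b κ := by
      rw [swap_apply_def]; split_ifs <;> simp_all
    have hlt : swap k l i < κ := by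
      rw [swap_apply_def]; split_ifs <;> simp_all
    have h := hC σ k l (swap k l i) κ hkl hb hlt.ne hbs
    rw [swap_apply_self, swap_apply_of_ne_of_ne hk.ne' hl.ne', hone σ k l hkl hb hk hl,
      hone _ k l hkl hb hk hl] at h
    simpa using h
  have hB : ∀ σ i j, i ≠ j → i < κ → j < κ → b i = b κ → b j = b κ →
      g σ i κ * g (σ * swap i κ) j κ = g σ j κ := by
    intro σ i j hij hi hj hbi hbj
    have h := hC σ i κ j κ hi.ne hbi hj.ne hbj
    rw [swap_apply_of_ne_of_ne hij.symm hj.ne, swap_apply_right,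
      hone σ j i hij.symm (hbj.trans hbi.symm) hj hi, one_mul] at h
    rw [h]
    have h2 := hA σ j i j hij.symm (hbj.trans hbi.symm) hj hi hj hbj
    rwa [swap_apply_left] at h2
  let B : Finset (Fin N) := Finset.univ.filter (fun c => c ≤ κ ∧ b c = b κ)
  have hκB : κ ∈ B := by simp [B]
  have hne : ∀ σ : Perm (Fin N), (B.image σ).Nonempty := fun σ => ⟨σ κ, Finset.mem_image_of_mem _ hκB⟩
  let i0 : Perm (Fin N) → Fin N := fun σ => σ⁻¹ ((B.image σ).min' (hne σ))
  have hi0 : ∀ σ, i0 σ ∈ B := by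
    intro σ
    have := Finset.min'_mem _ (hne σ)
    obtain ⟨c, hc, hce⟩ := Finset.mem_image.1 this
    simp only [i0, ← hce]
    simpa using hc
  have hsw : ∀ i j, b i = b j → i ≤ κ → j ≤ κ → ∀ c ∈ B, swap i j c ∈ B := by
    intro i j hb hi hj c hc
    simp only [B, Finset.mem_filter, Finset.mem_univ, true_and] at hc ⊢
    rw [swap_apply_def]; split_ifs <;> simp_all
  have hi0s : ∀ σ i j, b i = b j → i ≤ κ → j ≤ κ → i0 (σ * swap i j) = swap i j (i0 σ) := by
    intro σ i j hb hi hj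
    have : B.image (σ * swap i j) = B.image σ := by
      ext r
      simp only [Finset.mem_image]
      constructor
      · rintro ⟨c, hc, rfl⟩
        exact ⟨swap i j c, hsw i j hb hi hj c hc, rfl⟩
      · rintro ⟨c, hc, rfl⟩
        exact ⟨swap i j c, hsw i j hb hi hj c hc, by simp⟩
    simp only [i0, this]
    simp [mul_inv_rev]
  let G : Perm (Fin N) → Fin N → H := fun σ c => if c = κ then 1 else g σ c κ
  have hmain : ∀ σ i, i < κ → b i = b κ →
      G σ (i0 σ) = g σ i κ * G (σ * swap i κ) (i0 (σ * swap i κ)) := by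
    intro σ i hi hb
    rw [hi0s σ i κ hb hi.le le_rfl]
    have h0 := hi0 σ
    simp only [B, Finset.mem_filter, Finset.mem_univ, true_and] at h0
    generalize i0 σ = c at h0
    by_cases h1 : c = κ
    · subst h1
      simp [G, hi.ne, hinv σ i c hi.ne hb]
    · by_cases h2 : c = i
      · subst h2
        simp [G, hi.ne]
      · rw [swap_apply_of_ne_of_ne h2 h1]
        simp only [G, h1, if_false]
        exact (hB σ i c (Ne.symm h2) hi (lt_of_le_of_ne h0.1 h1) hb h0.2).symm
  refine ⟨fun σ => G σ (i0 σ), ?_⟩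
  intro σ i j hij hb hi hj
  show G σ (i0 σ) = g σ i j * G (σ * swap i j) (i0 (σ * swap i j))
  rcases lt_or_eq_of_le hi with hi' | rfl
  · rcases lt_or_eq_of_le hj with hj' | rfl
    · rw [hone σ i j hij hb hi' hj', one_mul, hi0s σ i j hb hi hj]
      have h0 := hi0 σ
      simp only [B, Finset.mem_filter, Finset.mem_univ, true_and] at h0
      generalize i0 σ = c at h0
      by_cases h1 : c = κ
      · subst h1
        rw [swap_apply_of_ne_of_ne hi'.ne' hj'.ne']
        simp [G]
      · have hc := lt_of_le_of_ne h0.1 h1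
        have h2 : swap i j c ≠ κ := by
          rw [swap_apply_def]; split_ifs
          exacts [hj'.ne, hi'.ne, h1]
        simp only [G, h1, h2, if_false]
        exact (hA σ i j c hij hb hi' hj' hc h0.2).symm
    · exact hmain σ i hi' hb
  · have hj' := lt_of_le_of_ne hj hij.symm
    rw [hsymm σ i j hij hb, swap_comm]
    exact hmain σ j hj' hb.symm

open Equiv in
/-- A flat group-valued function on block transpositions is a coboundary. -/
lemma flat_exact {N : ℕ} {H : Type*} [Group H] (b : Fin N → Bool)
    (f : Perm (Fin N) → Fin N → Fin N → H)
    (hsymm : ∀ σ i j, i ≠ j → b i = b j → f σ i j = f σ j i)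
    (hinv : ∀ σ i j, i ≠ j → b i = b j → f σ i j * f (σ * swap i j) i j = 1)
    (hC : ∀ σ i j k l, i ≠ j → b i = b j → k ≠ l → b k = b l →
      f σ i j * f (σ * swap i j) k l =
        f σ (swap i j k) (swap i j l) * f (σ * swap (swap i j k) (swap i j l)) i j) :
    ∃ u : Perm (Fin N) → H, ∀ σ i j, i ≠ j → b i = b j →
      u (σ * swap i j) = u σ * f σ i j := by
  have key : ∀ K : ℕ, ∃ u : Perm (Fin N) → H, ∀ σ i j, i ≠ j → b i = b j →
      (i : ℕ) < K → (j : ℕ) < K → u (σ * swap i j) = u σ * f σ i j := by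
    intro K
    induction K with
    | zero => exact ⟨fun _ => 1, fun σ i j _ _ h => absurd h (Nat.not_lt_zero _)⟩
    | succ K ih =>
      obtain ⟨u, hu⟩ := ih
      by_cases hK : K < N
      · obtain ⟨v, hv⟩ := flat_step b (fun σ i j => u σ * f σ i j * (u (σ * swap i j))⁻¹) ⟨K, hK⟩
          (by
            intro σ i j hij hb
            simp only [hsymm σ i j hij hb, swap_comm i j])
          (by
            intro σ i j hij hb
            have := hinv σ i j hij hb
            have e : σ * swap i j * swap i j = σ := by simp [mul_assoc]
            simp only [e]
            calc _ = u σ * (f σ i j * f (σ * swap i j) i j) * (u σ)⁻¹ := by group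
              _ = 1 := by rw [this]; group)
          (by
            intro σ i j k l hij hb hkl hb'
            have := hC σ i j k l hij hb hkl hb'
            have e : σ * swap i j * swap k l =
                σ * swap (swap i j k) (swap i j l) * swap i j := by
              rw [mul_assoc, mul_assoc, swap_apply_apply]
              simp [mul_assoc]
            simp only [e]
            generalize u (σ * swap (swap i j k) (swap i j l) * swap i j) = w
            calc _ = u σ * (f σ i j * f (σ * swap i j) k l) * w⁻¹ := by group
              _ = _ := by rw [this]; group)
          (by
            intro σ i j hij hb hi hj
            simp only [hu σ i j hij hb hi hj]
            group)
        refine ⟨fun σ => (v σ)⁻¹ * u σ, ?_⟩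
        intro σ i j hij hb hi hj
        have := hv σ i j hij hb (Fin.le_def.2 (by simpa using Nat.lt_succ_iff.1 hi))
          (Fin.le_def.2 (by simpa using Nat.lt_succ_iff.1 hj))
        simp only [this]
        group
      · refine ⟨u, fun σ i j hij hb _ _ => hu σ i j hij hb ?_ ?_⟩
        · have := i.2; omega
        · have := j.2; omega
  obtain ⟨u, hu⟩ := key N
  exact ⟨u, fun σ i j hij hb => hu σ i j hij hb i.2 j.2⟩

lemma ring_aux1 {R : Type*} [Ring R] (a b : R) :
    (a - b) * (a - b) = a * a + b * b - (a * b + b * a) := by noncomm_ring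

lemma ring_aux2 {R : Type*} [Ring R] (a b c : R) :
    (a - b) * (a - c) + (b - c) * (a - b) =
      (a * a - b * b) - (a * c + c * a) + (b * c + c * b) := by noncomm_ring

/-- A ring with anticommuting "transposition" elements (inside a Clifford algebra). -/
lemma exists_clifford (N : ℕ) : ∃ (A : Type) (_ : Ring A) (_ : CharZero A) (T : Fin N → Fin N → A),
    (∀ i j, T j i = - T i j) ∧ (∀ i j, i ≠ j → T i j * T i j = -1) ∧
    (∀ a b c, a ≠ b → a ≠ c → b ≠ c → T a b * T a c = - (T b c * T a b)) ∧
    (∀ i j k l, i ≠ k → i ≠ l → j ≠ k → j ≠ l → T i j * T k l = - (T k l * T i j)) := by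
  classical
  let Q : QuadraticForm ℚ (Fin N → ℚ) := QuadraticMap.weightedSumSquares ℚ (fun _ => (-1/2 : ℚ))
  let A := CliffordAlgebra Q
  let e : Fin N → A := fun i => CliffordAlgebra.ι Q (Pi.single i 1)
  have hsq : ∀ i, e i * e i = algebraMap ℚ A (-1/2) := by
    intro i
    simp only [e, A]
    rw [CliffordAlgebra.ι_sq_scalar]
    congr 1
    simp [Q, QuadraticMap.weightedSumSquares_apply, Pi.single_apply]
  have hanti : ∀ i j, i ≠ j → e i * e j = - (e j * e i) := by
    intro i j hij
    rw [eq_neg_iff_add_eq_zero]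
    simp only [e, A]
    rw [CliffordAlgebra.ι_mul_ι_add_swap]
    have : QuadraticMap.polar Q (Pi.single i 1) (Pi.single j 1) = 0 := by
      simp only [QuadraticMap.polar, Q, QuadraticMap.weightedSumSquares_apply, Pi.single_apply,
        Pi.add_apply, ← Finset.sum_sub_distrib]
      apply Finset.sum_eq_zero
      intro x _
      by_cases h1 : x = i
      · have : x ≠ j := by rw [h1]; exact hij
        simp [this]
      · simp [h1]
    rw [this, map_zero]
  have : Nontrivial A := inferInstance
  have hcz : CharZero A := algebraRat.charZero A
  refine ⟨A, inferInstance, hcz, fun i j => e i - e j, ?_, ?_, ?_, ?_⟩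
  · intro i j; simp
  · intro i j hij
    have h2 : algebraMap ℚ A (-1/2) + algebraMap ℚ A (-1/2) = -1 := by
      rw [← map_add]; norm_num
    have : (e i - e j) * (e i - e j) = e i * e i + e j * e j - (e i * e j + e j * e i) := by
      exact ring_aux1 _ _
    rw [this, hsq, hsq, h2, hanti i j hij]; simp
  · intro a b c hab hac hbc
    have h1 := hsq a
    rw [← hsq b] at h1
    have h2 := hanti a c hac
    have h3 := hanti b c hbc
    rw [eq_neg_iff_add_eq_zero]
    have : (e a - e b) * (e a - e c) + (e b - e c) * (e a - e b) =
      (e a * e a - e b * e b) - (e a * e c + e c * e a) + (e b * e c + e c * e b) := by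
      exact ring_aux2 _ _ _
    rw [this, h1, h2, h3]; simp
  · intro i j k l hik hil hjk hjl
    have h1 := hanti i k hik
    have h2 := hanti i l hil
    have h3 := hanti j k hjk
    have h4 := hanti j l hjl
    simp only [sub_mul, mul_sub, h1, h2, h3, h4]
    abel

open Equiv in
/-- The algebraic sign function coming from the spin extension of the symmetric group. -/
lemma exists_spin_sign (N : ℕ) : ∃ A : Perm (Fin N) → Fin N → Fin N → ℤ,
    (∀ σ i j, A σ i j = 1 ∨ A σ i j = -1) ∧
    (∀ σ i j, i ≠ j → A σ j i = - A σ i j) ∧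
    (∀ σ i j, i ≠ j → A σ i j * A (σ * swap i j) i j = -1) ∧
    (∀ σ a b c, a ≠ b → a ≠ c → b ≠ c →
      A σ a b * A (σ * swap a b) a c * A σ b c * A (σ * swap b c) a b = -1) ∧
    (∀ σ i j k l, i ≠ j → k ≠ l → i ≠ k → i ≠ l → j ≠ k → j ≠ l →
      A σ i j * A (σ * swap i j) k l * A σ k l * A (σ * swap k l) i j = -1) := by
  classical
  obtain ⟨R, _, _, T, hT1, hT2, hT3, hT4⟩ := exists_clifford N
  let Z : Subgroup Rˣ :=
    { carrier := {x | x = 1 ∨ x = -1}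
      mul_mem' := by rintro a b (rfl | rfl) (rfl | rfl) <;> simp
      one_mem' := by simp
      inv_mem' := by rintro a (rfl | rfl) <;> simp }
  have hZ : ∀ x, x ∈ Z ↔ x = 1 ∨ x = -1 := fun x => Iff.rfl
  have hN : Z.Normal := ⟨by rintro x (rfl | rfl) g <;> simp [hZ]⟩
  let U : Fin N → Fin N → Rˣ := fun i j => if h : i ≠ j then
    ⟨T i j, - T i j, by rw [mul_neg, hT2 i j h, neg_neg], by rw [neg_mul, hT2 i j h, neg_neg]⟩ else 1
  have hU : ∀ i j, i ≠ j → (U i j : R) = T i j := by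
    intro i j h; simp [U, h]
  have hmk : ∀ x y : Rˣ, (x = y ∨ x = -y) → (QuotientGroup.mk x : Rˣ ⧸ Z) = QuotientGroup.mk y := by
    rintro x y (rfl | rfl)
    · rfl
    · rw [QuotientGroup.eq, hZ]; right; simp
  have hU1 : ∀ i j, i ≠ j → U i j = - U j i := by
    intro i j h; ext; simp [hU i j h, hU j i h.symm, hT1 j i]
  have hU2 : ∀ i j, i ≠ j → U i j * U i j = -1 := by
    intro i j h; ext; simp [hU i j h, hT2 i j h]
  have hU3 : ∀ a b c, a ≠ b → a ≠ c → b ≠ c → U a b * U a c = - (U b c * U a b) := by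
    intro a b c h1 h2 h3; ext; simp [hU _ _ h1, hU _ _ h2, hU _ _ h3, hT3 a b c h1 h2 h3]
  have hU4 : ∀ i j k l, i ≠ j → k ≠ l → i ≠ k → i ≠ l → j ≠ k → j ≠ l →
      U i j * U k l = - (U k l * U i j) := by
    intro i j k l h h' h1 h2 h3 h4; ext; simp [hU _ _ h, hU _ _ h', hT4 i j k l h1 h2 h3 h4]
  have hconj : ∀ i j k l, i ≠ j → k ≠ l →
      (U i j * U k l = U (swap i j k) (swap i j l) * U i j ∨
      U i j * U k l = -(U (swap i j k) (swap i j l) * U i j)) := by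
    intro i j k l hij hkl
    by_cases h1 : k = i
    · subst h1
      by_cases h2 : l = j
      · subst h2
        right
        rw [swap_apply_left, swap_apply_right, hU1 k l hij]; simp
      · right
        rw [swap_apply_left, swap_apply_of_ne_of_ne hkl.symm h2]
        exact hU3 k j l hij hkl (Ne.symm h2)
    · by_cases h2 : k = j
      · subst h2
        by_cases h3 : l = i
        · subst h3
          right
          rw [swap_apply_left, swap_apply_right, hU1 l k hij]; simp
        · right
          rw [swap_apply_right, swap_apply_of_ne_of_ne h3 hkl.symm, hU1 i k hij]
          have := hU3 k i l hij.symm hkl (Ne.symm h3)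
          simp [this]
      · rw [swap_apply_of_ne_of_ne h1 h2]
        by_cases h3 : l = i
        · subst h3
          right
          rw [swap_apply_left, hU1 k l h1, hU1 k j h2]
          have := hU3 l j k hij (Ne.symm h1) (Ne.symm h2)
          simp [this]
        · by_cases h4 : l = j
          · subst h4
            right
            rw [swap_apply_right, hU1 k l h2, hU1 k i h1, hU1 i l hij]
            have := hU3 l i k hij.symm (Ne.symm h2) (Ne.symm h1)
            simp [this]
          · rw [swap_apply_of_ne_of_ne h3 h4]
            right
            exact hU4 i j k l hij hkl (Ne.symm h1) (Ne.symm h3) (Ne.symm h2) (Ne.symm h4)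
  obtain ⟨u, hu⟩ := flat_exact (N := N) (H := Rˣ ⧸ Z) (fun _ => true)
    (fun _ i j => QuotientGroup.mk (U i j))
    (fun σ i j hij _ => hmk _ _ (Or.inr (hU1 i j hij)))
    (fun σ i j hij _ => by
      rw [← QuotientGroup.mk_mul, ← QuotientGroup.mk_one]
      exact hmk _ _ (Or.inr (hU2 i j hij)))
    (fun σ i j k l hij _ hkl _ => by
      rw [← QuotientGroup.mk_mul, ← QuotientGroup.mk_mul]
      exact hmk _ _ (hconj i j k l hij hkl))
  choose L hL using fun σ => QuotientGroup.mk_surjective (u σ)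
  have hLT : ∀ σ i j, i ≠ j → ∃ a : ℤ, (a = 1 ∨ a = -1) ∧
      (L σ : R) * T i j = (a : R) * L (σ * swap i j) := by
    intro σ i j hij
    have h := hu σ i j hij rfl
    rw [← hL, ← hL, ← QuotientGroup.mk_mul, QuotientGroup.eq, hZ] at h
    rcases h with h | h
    · refine ⟨1, Or.inl rfl, ?_⟩
      rw [inv_mul_eq_one] at h
      rw [h]; simp [hU i j hij]
    · refine ⟨-1, Or.inr rfl, ?_⟩
      rw [inv_mul_eq_iff_eq_mul] at h
      have h' := congrArg (fun x : Rˣ => (x : R)) h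
      simp only [Units.val_mul, hU i j hij] at h'
      rw [h']; simp
  choose a ha1 ha2 using hLT
  let A : Perm (Fin N) → Fin N → Fin N → ℤ := fun σ i j => if h : i ≠ j then a σ i j h else 1
  have hA : ∀ σ i j, i ≠ j → (L σ : R) * T i j = (A σ i j : R) * L (σ * swap i j) := by
    intro σ i j h; simp only [A, dif_pos h]; exact ha2 σ i j h
  have hA1 : ∀ σ i j, A σ i j = 1 ∨ A σ i j = -1 := by
    intro σ i j; by_cases h : i ≠ j
    · simp only [A, dif_pos h]; exact ha1 σ i j h
    · simp [A, h]
  have hcancel : ∀ (p q : ℤ) σ, (p : R) * (L σ : R) = (q : R) * L σ → p = q := by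
    intro p q σ h
    have := (Units.mul_left_inj (L σ)).1 h
    exact_mod_cast this
  have hA2 : ∀ σ i j k l, i ≠ j → k ≠ l → (L σ : R) * (T i j * T k l) =
      ((A σ i j * A (σ * swap i j) k l : ℤ) : R) * L (σ * swap i j * swap k l) := by
    intro σ i j k l hij hkl
    rw [← mul_assoc, hA σ i j hij, mul_assoc, hA _ k l hkl]; push_cast; rw [mul_assoc (A σ i j : R)]
  have hfin : ∀ σ i j k l p q s t, i ≠ j → k ≠ l → p ≠ q → s ≠ t →
      T i j * T k l = - (T p q * T s t) →
      σ * swap i j * swap k l = σ * swap p q * swap s t →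
      A σ i j * A (σ * swap i j) k l * A σ p q * A (σ * swap p q) s t = -1 := by
    intro σ i j k l p q s t h1 h2 h3 h4 hT hs
    have e1 := hA2 σ i j k l h1 h2
    have e2 := hA2 σ p q s t h3 h4
    rw [hT, mul_neg, e2, hs] at e1
    have e3 : -(A σ p q * A (σ * swap p q) s t) = A σ i j * A (σ * swap i j) k l := by
      apply hcancel _ _ (σ * swap p q * swap s t)
      rw [← e1]; push_cast; simp
    rw [← e3]
    rcases hA1 σ p q with h | h <;> rcases hA1 (σ * swap p q) s t with h' | h' <;> simp [h, h']
  refine ⟨A, hA1, ?_, ?_, ?_, ?_⟩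
  · intro σ i j hij
    apply hcancel _ _ (σ * swap i j)
    have := hA σ j i hij.symm
    rw [hT1 i j, mul_neg, hA σ i j hij, swap_comm j i] at this
    rw [← this]; push_cast; simp
  · intro σ i j hij
    apply hcancel _ _ σ
    have := hA2 σ i j i j hij hij
    rw [hT2 i j hij] at this
    have e : σ * swap i j * swap i j = σ := by simp [mul_assoc]
    rw [e] at this
    rw [← this]; simp
  · intro σ a b c hab hac hbc
    refine hfin σ a b a c b c a b hab hac hbc hab (hT3 a b c hab hac hbc) ?_
    rw [mul_assoc, mul_assoc]
    congr 1
    ext v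
    simp only [Perm.mul_apply, swap_apply_def]
    grind
  · intro σ i j k l hij hkl h1 h2 h3 h4
    refine hfin σ i j k l k l i j hij hkl hkl hij (hT4 i j k l h1 h2 h3 h4) ?_
    rw [mul_assoc, mul_assoc]
    congr 1
    ext v
    simp only [Perm.mul_apply, swap_apply_def]
    grind

/-- indicator of the cyclic interval from `i` to `j` -/
def cycInd {N : ℕ} (i j c : Fin N) : ℤ := if c - i < j - i then 1 else 0

lemma fin_sub_val {N : ℕ} (a b : Fin N) :
    ((a - b : Fin N) : ℕ) = if (b : ℕ) ≤ a then (a : ℕ) - b else N + a - b := by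
  have ha := a.2
  have hb := b.2
  rw [Fin.val_sub]
  split_ifs with h
  · have : N - (b : ℕ) + a = (a - b) + N := by omega
    rw [this, Nat.add_mod_right, Nat.mod_eq_of_lt (by omega)]
  · rw [Nat.mod_eq_of_lt (by omega)]; omega

lemma cycInd_self {N : ℕ} {i j : Fin N} (h : i ≠ j) : cycInd i j i = 1 := by
  have : (i : ℕ) ≠ j := fun e => h (Fin.ext e)
  have hi := i.2
  unfold cycInd
  rw [if_pos]
  rw [Fin.lt_def, fin_sub_val, fin_sub_val]
  split_ifs <;> omega

lemma cycInd_cases {N : ℕ} (i j c : Fin N) : cycInd i j c = 0 ∨ cycInd i j c = 1 := by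
  unfold cycInd; split_ifs <;> simp

/-- cyclic predecessor -/
def cycPred {N : ℕ} (c : Fin N) : Fin N :=
  ⟨if (c : ℕ) = 0 then N - 1 else c - 1, by have := c.2; split_ifs <;> omega⟩

lemma cycInd_jump {N : ℕ} {i j : Fin N} (h : i ≠ j) (c : Fin N) :
    cycInd i j c - cycInd i j (cycPred c) =
      (if c = i then 1 else 0) - (if c = j then 1 else 0) := by
  have : (i : ℕ) ≠ j := fun e => h (Fin.ext e)
  have hi := i.2
  have hj := j.2
  have hc := c.2
  unfold cycInd cycPred
  simp only [Fin.lt_def, fin_sub_val, Fin.ext_iff]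
  split_ifs <;> omega

lemma cycInd_add {N : ℕ} {a b c : Fin N} (h : b - a < c - a) (p : Fin N) :
    cycInd a c p = cycInd a b p + cycInd b c p := by
  have ha := a.2
  have hb := b.2
  have hc := c.2
  have hp := p.2
  unfold cycInd
  simp only [Fin.lt_def, fin_sub_val] at h ⊢
  split_ifs at h ⊢ <;> omega

/-- exactly one of the two cyclic orders -/
lemma cyc_total {N : ℕ} {a b c : Fin N} (hab : a ≠ b) (hac : a ≠ c) (hbc : b ≠ c) :
    b - a < c - a ∨ a - b < c - b := by
  have ha := a.2
  have hb := b.2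
  have hc := c.2
  have h1 : (a : ℕ) ≠ b := fun e => hab (Fin.ext e)
  have h2 : (a : ℕ) ≠ c := fun e => hac (Fin.ext e)
  have h3 : (b : ℕ) ≠ c := fun e => hbc (Fin.ext e)
  simp only [Fin.lt_def, fin_sub_val]
  split_ifs <;> omega

lemma cyc_total' {N : ℕ} {a b c : Fin N} (hab : a ≠ b) (hac : a ≠ c) (hbc : b ≠ c) :
    b - a < c - a ∨ c - a < b - a := by
  have ha := a.2
  have hb := b.2
  have hc := c.2
  have h1 : (a : ℕ) ≠ b := fun e => hab (Fin.ext e)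
  have h2 : (a : ℕ) ≠ c := fun e => hac (Fin.ext e)
  have h3 : (b : ℕ) ≠ c := fun e => hbc (Fin.ext e)
  simp only [Fin.lt_def, fin_sub_val]
  split_ifs <;> omega

lemma dom_eq {N : ℕ} (r : GridRect N) (p : Fin N × Fin N) :
    (r.dom p : ℤ) = cycInd r.i r.j p.1 * cycInd (r.perm r.i) (r.perm r.j) p.2 := by
  unfold GridRect.dom cycInd
  split_ifs <;> simp_all

/-- `r` swaps the columns `a, b`, with direction sign `e`. -/
def RectRep {N : ℕ} (r : GridRect N) (a b : Fin N) (e : ℤ) : Prop :=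
  (e = 1 ∧ r.i = a ∧ r.j = b) ∨ (e = -1 ∧ r.i = b ∧ r.j = a)

open Equiv in
lemma exists_rectRep {N : ℕ} (r : GridRect N) (a b : Fin N)
    (h : swap r.i r.j = swap a b) : ∃ e, RectRep r a b e := by
  have h1 := congrArg (fun s => s r.i) h
  have hne := r.hij
  simp only [swap_apply_left] at h1
  rw [swap_apply_def] at h1
  split_ifs at h1 with h2 h3
  · exact ⟨1, Or.inl ⟨rfl, h2, h1⟩⟩
  · exact ⟨-1, Or.inr ⟨rfl, h3, h1⟩⟩
  · exact absurd h1.symm hne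

lemma rectRep_col {N : ℕ} {r : GridRect N} {a b : Fin N} {e : ℤ} (h : RectRep r a b e)
    (c ρ : Fin N) : (r.dom (c, ρ) : ℤ) - r.dom (cycPred c, ρ) =
      e * cycInd (r.perm r.i) (r.perm r.j) ρ * ((if c = a then 1 else 0) - (if c = b then 1 else 0)) := by
  rw [dom_eq, dom_eq, ← sub_mul, cycInd_jump r.hij]
  rcases h with ⟨rfl, rfl, rfl⟩ | ⟨rfl, rfl, rfl⟩ <;> ring

lemma rectRep_row {N : ℕ} {r : GridRect N} {a b : Fin N} {e : ℤ} (h : RectRep r a b e)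
    (c ρ : Fin N) : (r.dom (c, ρ) : ℤ) - r.dom (c, cycPred ρ) =
      e * cycInd r.i r.j c *
        ((if ρ = r.perm a then 1 else 0) - (if ρ = r.perm b then 1 else 0)) := by
  rw [dom_eq, dom_eq, ← mul_sub, cycInd_jump (r.perm.injective.ne r.hij)]
  rcases h with ⟨rfl, rfl, rfl⟩ | ⟨rfl, rfl, rfl⟩ <;> ring

lemma rectRep_sign {N : ℕ} {r : GridRect N} {a b : Fin N} {e : ℤ} (h : RectRep r a b e) :
    e = 1 ∨ e = -1 := by
  rcases h with ⟨h, _⟩ | ⟨h, _⟩ <;> simp [h]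

/-- two signed 0/1 values that agree and don't vanish have the same sign -/
lemma sign_eq_of {e e' : ℤ} (he : e = 1 ∨ e = -1) {R R' : ℤ} (hR' : R' = 0 ∨ R' = 1)
    (hx : R = 1) (h : e * R = e' * R') : e = e' := by
  rw [hx] at h
  rcases hR' with h' | h' <;> rw [h'] at h <;> simp at h
  · rcases he with he | he <;> omega
  · exact h

lemma rectRep_unique {N : ℕ} {r r' : GridRect N} {a b : Fin N} {e : ℤ} (h : RectRep r a b e)
    (h' : RectRep r' a b e) (hp : r.perm = r'.perm) : r = r' := by
  have : r.i = r'.i ∧ r.j = r'.j := by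
    rcases h with ⟨h1, h2, h3⟩ | ⟨h1, h2, h3⟩ <;> rcases h' with ⟨h1', h2', h3'⟩ | ⟨h1', h2', h3'⟩ <;>
      first | (exfalso; omega) | simp [h2, h3, h2', h3']
  cases r; cases r'; simp_all

open Equiv in
lemma swaps_disjoint {α : Type*} [DecidableEq α] {i j k l p q s t : α} (hij : i ≠ j) (hkl : k ≠ l)
    (hpq : p ≠ q) (hst : s ≠ t) (h1 : i ≠ k) (h2 : i ≠ l) (h3 : j ≠ k) (h4 : j ≠ l)
    (h : swap i j * swap k l = swap p q * swap s t) :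
    (swap p q = swap i j ∧ swap s t = swap k l) ∨ (swap p q = swap k l ∧ swap s t = swap i j) := by
  have hv : ∀ v, swap i j (swap k l v) = swap p q (swap s t v) := fun v => by
    simpa using congrArg (fun x => x v) h
  have key : swap p q = swap i j ∨ swap p q = swap k l := by
    have a1 := hv i
    have a2 := hv j
    have a3 := hv k
    have a4 := hv l
    simp only [swap_apply_def] at a1 a2 a3 a4
    have : (p = i ∧ q = j) ∨ (p = j ∧ q = i) ∨ (p = k ∧ q = l) ∨ (p = l ∧ q = k) := by
      grind
    rcases this with ⟨rfl, rfl⟩ | ⟨rfl, rfl⟩ | ⟨rfl, rfl⟩ | ⟨rfl, rfl⟩ <;> simp [swap_comm]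
  rcases key with hk | hk
  · left; refine ⟨hk, ?_⟩
    rw [hk] at h
    exact (mul_left_cancel h).symm
  · right; refine ⟨hk, ?_⟩
    rw [hk] at h
    have hc : swap i j * swap k l = swap k l * swap i j := by
      ext v; simp only [Perm.mul_apply, swap_apply_def]; grind
    rw [hc] at h
    exact (mul_left_cancel h).symm

open Equiv in
lemma swaps_triple {α : Type*} [DecidableEq α] {a b c p q s t : α} (hab : a ≠ b) (hac : a ≠ c)
    (hbc : b ≠ c) (hpq : p ≠ q) (hst : s ≠ t)
    (h : swap a b * swap a c = swap p q * swap s t) :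
    (swap p q = swap a b ∧ swap s t = swap a c) ∨ (swap p q = swap b c ∧ swap s t = swap a b) ∨
    (swap p q = swap a c ∧ swap s t = swap b c) := by
  have hv : ∀ v, swap a b (swap a c v) = swap p q (swap s t v) := fun v => by
    simpa using congrArg (fun x => x v) h
  have key : swap p q = swap a b ∨ swap p q = swap b c ∨ swap p q = swap a c := by
    have a1 := hv a
    have a2 := hv b
    have a3 := hv c
    simp only [swap_apply_def] at a1 a2 a3
    have : (p = a ∧ q = b) ∨ (p = b ∧ q = a) ∨ (p = b ∧ q = c) ∨ (p = c ∧ q = b) ∨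
        (p = a ∧ q = c) ∨ (p = c ∧ q = a) := by
      grind
    rcases this with ⟨rfl, rfl⟩ | ⟨rfl, rfl⟩ | ⟨rfl, rfl⟩ | ⟨rfl, rfl⟩ | ⟨rfl, rfl⟩ | ⟨rfl, rfl⟩ <;>
      simp [swap_comm]
  rcases key with hk | hk | hk
  · left; refine ⟨hk, ?_⟩
    rw [hk] at h
    exact (mul_left_cancel h).symm
  · right; left; refine ⟨hk, ?_⟩
    rw [hk] at h
    have hc : swap a b * swap a c = swap b c * swap a b := by
      ext v; simp only [Perm.mul_apply, swap_apply_def]; grind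
    rw [hc] at h
    exact (mul_left_cancel h).symm
  · right; right; refine ⟨hk, ?_⟩
    rw [hk] at h
    have hc : swap a b * swap a c = swap a c * swap b c := by
      ext v; simp only [Perm.mul_apply, swap_apply_def]; grind
    rw [hc] at h
    exact (mul_left_cancel h).symm

lemma square_col {N : ℕ} {r1 r2 r3 r4 : GridRect N} (h : IsSquareOf r1 r2 r3 r4)
    {a1 b1 a2 b2 a3 b3 a4 b4 : Fin N} {e1 e2 e3 e4 : ℤ} (h1 : RectRep r1 a1 b1 e1)
    (h2 : RectRep r2 a2 b2 e2) (h3 : RectRep r3 a3 b3 e3) (h4 : RectRep r4 a4 b4 e4) (c ρ : Fin N) :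
    e1 * cycInd (r1.perm r1.i) (r1.perm r1.j) ρ *
        ((if c = a1 then 1 else 0) - (if c = b1 then 1 else 0)) +
      e2 * cycInd (r2.perm r2.i) (r2.perm r2.j) ρ *
        ((if c = a2 then 1 else 0) - (if c = b2 then 1 else 0)) =
      e3 * cycInd (r3.perm r3.i) (r3.perm r3.j) ρ *
        ((if c = a3 then 1 else 0) - (if c = b3 then 1 else 0)) +
      e4 * cycInd (r4.perm r4.i) (r4.perm r4.j) ρ *
        ((if c = a4 then 1 else 0) - (if c = b4 then 1 else 0)) := by
  rw [← rectRep_col h1, ← rectRep_col h2, ← rectRep_col h3, ← rectRep_col h4]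
  obtain ⟨_, _, _, _, _, _, hd⟩ := h
  have d1 := hd (c, ρ)
  have d2 := hd (cycPred c, ρ)
  omega

lemma square_row {N : ℕ} {r1 r2 r3 r4 : GridRect N} (h : IsSquareOf r1 r2 r3 r4)
    {a1 b1 a2 b2 a3 b3 a4 b4 : Fin N} {e1 e2 e3 e4 : ℤ} (h1 : RectRep r1 a1 b1 e1)
    (h2 : RectRep r2 a2 b2 e2) (h3 : RectRep r3 a3 b3 e3) (h4 : RectRep r4 a4 b4 e4) (c ρ : Fin N) :
    e1 * cycInd r1.i r1.j c *
        ((if ρ = r1.perm a1 then 1 else 0) - (if ρ = r1.perm b1 then 1 else 0)) +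
      e2 * cycInd r2.i r2.j c *
        ((if ρ = r2.perm a2 then 1 else 0) - (if ρ = r2.perm b2 then 1 else 0)) =
      e3 * cycInd r3.i r3.j c *
        ((if ρ = r3.perm a3 then 1 else 0) - (if ρ = r3.perm b3 then 1 else 0)) +
      e4 * cycInd r4.i r4.j c *
        ((if ρ = r4.perm a4 then 1 else 0) - (if ρ = r4.perm b4 then 1 else 0)) := by
  rw [← rectRep_row h1, ← rectRep_row h2, ← rectRep_row h3, ← rectRep_row h4]
  obtain ⟨_, _, _, _, _, _, hd⟩ := h
  have d1 := hd (c, ρ)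
  have d2 := hd (c, cycPred ρ)
  omega

/-- A column swapped by `r1` and `r3` but not by `r2`, `r4` forces `r1`, `r3` to agree in
direction; stated for an arbitrary identity of the form provided by `square_col`. -/
lemma cyc_row_one {N : ℕ} (r : GridRect N) :
    cycInd (r.perm r.i) (r.perm r.j) (r.perm r.i) = 1 :=
  cycInd_self (r.perm.injective.ne r.hij)

lemma square_symm {N : ℕ} {r1 r2 r3 r4 : GridRect N} (h : IsSquareOf r1 r2 r3 r4) :
    IsSquareOf r3 r4 r1 r2 := by
  obtain ⟨h1, h2, h3, h4, h5, h6, h7⟩ := h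
  exact ⟨h1.symm, h2.symm, h4, h3, h5.symm, by rw [h5, h2]; exact h6, fun p => (h7 p).symm⟩

open Equiv in
lemma square_T2 {N : ℕ} {r1 r2 r3 r4 : GridRect N} (h : IsSquareOf r1 r2 r3 r4)
    {a b c : Fin N} (hab : a ≠ b) (hac : a ≠ c) (hbc : b ≠ c) {e1 e2 e3 e4 : ℤ}
    (h1 : RectRep r1 a b e1)
    (h2 : RectRep r2 a c e2) (h3 : RectRep r3 b c e3) (h4 : RectRep r4 a b e4)
    (hs1 : r2.perm = r1.perm * swap a b) (hs3 : r4.perm = r1.perm * swap b c)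
    (hs2 : r3.perm = r1.perm) :
    e2 = e3 ∧ e1 = e4 := by
  constructor
  · have := square_col h h1 h2 h3 h4 c (r2.perm r2.i)
    rw [cyc_row_one] at this
    simp [hac.symm, hbc.symm] at this
    exact sign_eq_of (rectRep_sign h2) (cycInd_cases _ _ _) rfl (by simpa using this)
  · have := square_row h h1 h2 h3 h4 r1.i (r1.perm a)
    rw [cycInd_self r1.hij, hs1, hs2, hs3] at this
    simp [hab, hac, swap_apply_of_ne_of_ne hab hac, swap_apply_of_ne_of_ne hac.symm hbc.symm] at this
    exact sign_eq_of (rectRep_sign h1) (cycInd_cases _ _ _) rfl (by simpa using this)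

open Equiv in
lemma exists_sign (N : ℕ) (R : Set (GridRect N)) : ∃ S : GridRect N → ℤ, IsSignAssignment R S := by
  obtain ⟨A, hA, hanti, hinv, hT, hD⟩ := exists_spin_sign N
  have hval : ∀ (r : GridRect N) a b e, RectRep r a b e → A r.perm r.i r.j = e * A r.perm a b := by
    rintro r a b e (⟨rfl, rfl, rfl⟩ | ⟨rfl, rfl, rfl⟩)
    · simp
    · rw [hanti _ _ _ r.hij]; simp
  have hend : ∀ r : GridRect N, r.endPerm = r.perm * swap r.i r.j := fun r => rfl
  have hTT : ∀ (r1 r2 r3 r4 : GridRect N) (a b c : Fin N), IsSquareOf r1 r2 r3 r4 →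
      a ≠ b → a ≠ c → b ≠ c → swap r1.i r1.j = swap a b → swap r2.i r2.j = swap a c →
      swap r3.i r3.j = swap b c → swap r4.i r4.j = swap a b →
      A r1.perm r1.i r1.j * A r2.perm r2.i r2.j * A r3.perm r3.i r3.j * A r4.perm r4.i r4.j = -1 := by
    intro r1 r2 r3 r4 a b c hsq hab hac hbc s1 s2 s3 s4
    have hsq' := hsq
    obtain ⟨hne, h31, h21, h43, h42, hz, hd⟩ := hsq
    rw [hend, s1] at h21
    rw [hend, s3, h31] at h43
    obtain ⟨e1, p1⟩ := exists_rectRep r1 a b s1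
    obtain ⟨e2, p2⟩ := exists_rectRep r2 a c s2
    obtain ⟨e3, p3⟩ := exists_rectRep r3 b c s3
    obtain ⟨e4, p4⟩ := exists_rectRep r4 a b s4
    obtain ⟨q1, q2⟩ := square_T2 hsq' hab hac hbc p1 p2 p3 p4 h21 h43 h31
    rw [hval _ _ _ _ p1, hval _ _ _ _ p2, hval _ _ _ _ p3, hval _ _ _ _ p4, h21, h43, h31, q1, q2]
    rw [← hT r1.perm a b c hab hac hbc]
    rcases rectRep_sign p3 with h | h <;> rcases rectRep_sign p4 with h' | h' <;> rw [h, h'] <;> ring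
  refine ⟨fun r => A r.perm r.i r.j, fun r _ => hA _ _ _, ?_, ?_, ?_⟩
  · intro r _ _
    show A r.perm r.i r.j * A (r.perm * swap r.i r.j) r.j r.i = 1
    have := hinv r.perm r.i r.j r.hij
    rw [hanti _ _ _ r.hij]
    linarith
  · intro r _ _
    exact hinv r.perm r.i r.j r.hij
  · intro r1 r2 r3 r4 hsq _ _ _ _
    show A r1.perm r1.i r1.j * A r2.perm r2.i r2.j * A r3.perm r3.i r3.j * A r4.perm r4.i r4.j = -1
    have hsq' := hsq
    obtain ⟨hne, h31, h21, h43, h42, hz, hd⟩ := hsq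
    have hz' := hz
    rw [hend, h21, hend, mul_assoc] at hz'
    rw [hend, hend, h43, h21, hend, hend, h31, mul_assoc, mul_assoc] at h42
    have hprod := (mul_left_cancel h42).symm
    have hprod1 : swap r1.i r1.j * swap r2.i r2.j ≠ 1 := by
      intro h; rw [h] at hz'; simp at hz'
    -- degenerate case: the same intermediate generator
    have hdeg : ∀ a b c d : Fin N, a ≠ c → a ≠ d → d ≠ a → d ≠ b →
        a ≠ b → c ≠ d → swap r1.i r1.j = swap a b → swap r2.i r2.j = swap c d →
        swap r3.i r3.j = swap a b → swap r4.i r4.j = swap c d → False := by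
      intro a b c d hac had hda hdb hab hcd s1 s2 s3 s4
      obtain ⟨e1, p1⟩ := exists_rectRep r1 a b s1
      obtain ⟨e2, p2⟩ := exists_rectRep r2 c d s2
      obtain ⟨e3, p3⟩ := exists_rectRep r3 a b s3
      obtain ⟨e4, p4⟩ := exists_rectRep r4 c d s4
      have q1 : e1 = e3 := by
        have := square_col hsq' p1 p2 p3 p4 a (r1.perm r1.i)
        rw [cyc_row_one] at this
        simp [hac, had, hab] at this
        exact sign_eq_of (rectRep_sign p1) (cycInd_cases _ _ _) rfl (by simpa using this)
      have q2 : e2 = e4 := by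
        have := square_col hsq' p1 p2 p3 p4 d (r2.perm r2.i)
        rw [cyc_row_one] at this
        simp [hda, hdb, hcd.symm] at this
        exact sign_eq_of (rectRep_sign p2) (cycInd_cases _ _ _) rfl (by simpa using this)
      subst q1 q2
      have t1 := rectRep_unique p1 p3 h31.symm
      have t2 := rectRep_unique p2 p4 (by rw [h21, h43, t1])
      exact hne (by rw [t1, t2])
    have htriple : ∀ a b c : Fin N, a ≠ b → a ≠ c → b ≠ c → swap r1.i r1.j = swap a b →
        swap r2.i r2.j = swap a c →
        A r1.perm r1.i r1.j * A r2.perm r2.i r2.j * A r3.perm r3.i r3.j * A r4.perm r4.i r4.j = -1 := by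
      intro a b c hab hac hbc s1 s2
      rw [s1, s2] at hprod
      rcases swaps_triple hab hac hbc r3.hij r4.hij hprod with ⟨s3, s4⟩ | ⟨s3, s4⟩ | ⟨s3, s4⟩
      · exfalso
        refine hdeg b a a c hab.symm hbc hbc.symm hac.symm hab.symm hac ?_ s2 ?_ s4
        · rw [s1, swap_comm]
        · rw [s3, swap_comm]
      · exact hTT r1 r2 r3 r4 a b c hsq' hab hac hbc s1 s2 s3 s4
      · have := hTT r3 r4 r1 r2 c a b (square_symm hsq') hac.symm hbc.symm hab
          (by rw [s3, swap_comm]) (by rw [s4, swap_comm]) s1 (by rw [s2, swap_comm])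
        rw [← this]; ring
    have n1 := r1.hij
    have n2 := r2.hij
    by_cases c1 : r1.i = r2.i
    · refine htriple r1.i r1.j r2.j n1 (c1 ▸ n2) ?_ rfl (by rw [c1])
      intro h; apply hprod1; rw [c1, h]; simp
    by_cases c2 : r1.i = r2.j
    · refine htriple r1.i r1.j r2.i n1 c1 ?_ rfl (by rw [c2, swap_comm])
      intro h; apply hprod1; rw [c2, h, swap_comm]; simp
    by_cases c3 : r1.j = r2.i
    · exact htriple r1.j r1.i r2.j n1.symm (c3 ▸ n2) c2 (swap_comm _ _) (by rw [c3])
    by_cases c4 : r1.j = r2.j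
    · exact htriple r1.j r1.i r2.i n1.symm c3 c1 (swap_comm _ _) (by rw [c4, swap_comm])
    rcases swaps_disjoint n1 n2 r3.hij r4.hij c1 c2 c3 c4 hprod with ⟨s3, s4⟩ | ⟨s3, s4⟩
    · exact (hdeg _ _ _ _ c1 c2 (Ne.symm c2) (Ne.symm c4) n1 n2 rfl rfl s3 s4).elim
    · have p1 : RectRep r1 r1.i r1.j 1 := Or.inl ⟨rfl, rfl, rfl⟩
      have p2 : RectRep r2 r2.i r2.j 1 := Or.inl ⟨rfl, rfl, rfl⟩
      obtain ⟨e3, p3⟩ := exists_rectRep r3 _ _ s3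
      obtain ⟨e4, p4⟩ := exists_rectRep r4 _ _ s4
      have q1 : 1 = e4 := by
        have := square_col hsq' p1 p2 p3 p4 r1.i (r1.perm r1.i)
        rw [cyc_row_one] at this
        simp [c1, c2, n1] at this
        exact sign_eq_of (rectRep_sign p1) (cycInd_cases _ _ _) rfl (by simpa using this)
      have q2 : 1 = e3 := by
        have := square_col hsq' p1 p2 p3 p4 r2.i (r2.perm r2.i)
        rw [cyc_row_one] at this
        simp [Ne.symm c1, Ne.symm c3, n2] at this
        exact sign_eq_of (rectRep_sign p2) (cycInd_cases _ _ _) rfl (by simpa using this)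
      rw [hval _ _ _ _ p3, hval _ _ _ _ p4, ← q1, ← q2, one_mul, one_mul, h43, h21, h31, hend, hend,
        s3, h31]
      exact hD _ _ _ _ _ n1 n2 c1 c2 c3 c4

/-- The unit attached to a sign. -/
def toUnit (x : ℤ) : ℤˣ := if x = 1 then 1 else -1

lemma toUnit_val {x : ℤ} (h : x = 1 ∨ x = -1) : ((toUnit x : ℤˣ) : ℤ) = x := by
  rcases h with rfl | rfl <;> simp [toUnit]

lemma units_aux (a b c d a' b' c' d' : ℤˣ) (h : a * b * c * d = -1) (h' : a' * b' * c' * d' = -1) :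
    (a * a') * (b * b') = (c * c') * (d * d') := by
  revert a b c d a' b' c' d'; decide

lemma units_aux2 (a b a' b' e : ℤˣ) (h : a * b = e) (h' : a' * b' = e) : a * a' = b * b' := by
  revert a b a' b' e; decide

open Equiv in
/-- The ratio of two sign assignments is a flat function on undirected edges. -/
lemma ratio_flat {N : ℕ} (Sg : Set (Perm (Fin N))) (S S' : GridRect N → ℤ)
    (hS : IsSignAssignment {r | r.perm ∈ Sg ∧ r.endPerm ∈ Sg} S)
    (hS' : IsSignAssignment {r | r.perm ∈ Sg ∧ r.endPerm ∈ Sg} S') :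
    ∃ p : Perm (Fin N) → Fin N → Fin N → ℤˣ,
      (∀ r : GridRect N, r.perm ∈ Sg → r.endPerm ∈ Sg → S' r = p r.perm r.i r.j * S r) ∧
      (∀ σ i j, i ≠ j → σ ∈ Sg → σ * swap i j ∈ Sg → p σ i j = p σ j i) ∧
      (∀ σ i j, i ≠ j → σ ∈ Sg → σ * swap i j ∈ Sg → p (σ * swap i j) i j = p σ i j) ∧
      (∀ σ i j k l, i ≠ j → k ≠ l → σ ∈ Sg → σ * swap i j ∈ Sg → σ * swap i j * swap k l ∈ Sg →
        σ * swap (swap i j k) (swap i j l) ∈ Sg →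
        p σ i j * p (σ * swap i j) k l =
        p σ (swap i j k) (swap i j l) * p (σ * swap (swap i j k) (swap i j l)) i j) := by
  classical
  obtain ⟨v, ha, hb, hsq⟩ := hS
  obtain ⟨v', ha', hb', hsq'⟩ := hS'
  simp only [Set.mem_ofPred_eq] at v ha hb hsq v' ha' hb' hsq'
  let P : GridRect N → ℤˣ := fun r => toUnit (S r) * toUnit (S' r)
  let p : Perm (Fin N) → Fin N → Fin N → ℤˣ := fun σ i j =>
    if h : i ≠ j then P ⟨σ, i, j, h⟩ else 1
  have hp : ∀ σ i j (h : i ≠ j), p σ i j = P ⟨σ, i, j, h⟩ := fun σ i j h => by simp only [p, dif_pos h]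
  have hss : ∀ (σ : Perm (Fin N)) i j, σ * swap i j * swap i j = σ := by simp [mul_assoc]
  have hrev : ∀ σ i j, i ≠ j → σ ∈ Sg → σ * swap i j ∈ Sg → p (σ * swap i j) j i = p σ i j := by
    intro σ i j h h1 h2
    have h3 : (σ * swap i j) * swap j i ∈ Sg := by rwa [swap_comm j i, hss]
    rw [hp _ _ _ h, hp _ _ _ h.symm]
    have e := ha ⟨σ, i, j, h⟩ ⟨h1, h2⟩ ⟨h2, h3⟩
    have e' := ha' ⟨σ, i, j, h⟩ ⟨h1, h2⟩ ⟨h2, h3⟩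
    refine (units_aux2 _ _ _ _ 1 ?_ ?_).symm
    · ext; push_cast
      rw [toUnit_val (v ⟨σ, i, j, h⟩ ⟨h1, h2⟩), toUnit_val (v ⟨σ * swap i j, j, i, h.symm⟩ ⟨h2, h3⟩)]; exact e
    · ext; push_cast
      rw [toUnit_val (v' ⟨σ, i, j, h⟩ ⟨h1, h2⟩), toUnit_val (v' ⟨σ * swap i j, j, i, h.symm⟩ ⟨h2, h3⟩)]; exact e'
  have hsame : ∀ σ i j, i ≠ j → σ ∈ Sg → σ * swap i j ∈ Sg → p (σ * swap i j) i j = p σ i j := by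
    intro σ i j h h1 h2
    have h3 : (σ * swap i j) * swap i j ∈ Sg := by rwa [hss]
    rw [hp _ _ _ h, hp _ _ _ h]
    have e := hb ⟨σ, i, j, h⟩ ⟨h1, h2⟩ ⟨h2, h3⟩
    have e' := hb' ⟨σ, i, j, h⟩ ⟨h1, h2⟩ ⟨h2, h3⟩
    refine (units_aux2 _ _ _ _ (-1) ?_ ?_).symm
    · ext; push_cast
      rw [toUnit_val (v ⟨σ, i, j, h⟩ ⟨h1, h2⟩), toUnit_val (v ⟨σ * swap i j, i, j, h⟩ ⟨h2, h3⟩)]; exact e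
    · ext; push_cast
      rw [toUnit_val (v' ⟨σ, i, j, h⟩ ⟨h1, h2⟩), toUnit_val (v' ⟨σ * swap i j, i, j, h⟩ ⟨h2, h3⟩)]; exact e'
  have hsym : ∀ σ i j, i ≠ j → σ ∈ Sg → σ * swap i j ∈ Sg → p σ i j = p σ j i := by
    intro σ i j h h1 h2
    rw [← hrev σ i j h h1 h2, ← hsame σ j i h.symm h1 (by rwa [swap_comm]), swap_comm]
  have hsquare : ∀ r1 r2 r3 r4 : GridRect N, IsSquareOf r1 r2 r3 r4 → r1.perm ∈ Sg →
      r1.endPerm ∈ Sg → r2.endPerm ∈ Sg → r3.endPerm ∈ Sg → P r1 * P r2 = P r3 * P r4 := by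
    intro r1 r2 r3 r4 h h1 h2 h3 h4
    obtain ⟨_, e1, e2, e3, e4, _, _⟩ := id h
    have m1 : r1.perm ∈ Sg ∧ r1.endPerm ∈ Sg := ⟨h1, h2⟩
    have m2 : r2.perm ∈ Sg ∧ r2.endPerm ∈ Sg := ⟨by rwa [e2], h3⟩
    have m3 : r3.perm ∈ Sg ∧ r3.endPerm ∈ Sg := ⟨by rwa [e1], h4⟩
    have m4 : r4.perm ∈ Sg ∧ r4.endPerm ∈ Sg := ⟨by rwa [e3], by rwa [e4]⟩
    have q := hsq r1 r2 r3 r4 h m1 m2 m3 m4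
    have q' := hsq' r1 r2 r3 r4 h m1 m2 m3 m4
    apply units_aux
    · ext; push_cast
      rw [toUnit_val (v _ m1), toUnit_val (v _ m2), toUnit_val (v _ m3), toUnit_val (v _ m4)]
      exact q
    · ext; push_cast
      rw [toUnit_val (v' _ m1), toUnit_val (v' _ m2), toUnit_val (v' _ m3), toUnit_val (v' _ m4)]
      exact q'
  have hz : ∀ (σ : Perm (Fin N)) a b c, a ≠ b → a ≠ c → b ≠ c →
      σ * swap a b * swap a c = σ * swap b c * swap a b := by
    intro σ a b c h1 h2 h3
    rw [mul_assoc, mul_assoc]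
    congr 1
    ext v; simp only [Perm.mul_apply, swap_apply_def]; grind
  -- triple relation, positive orientation
  have hT0 : ∀ σ a b c, a ≠ b → a ≠ c → b ≠ c → b - a < c - a → σ b - σ a < σ c - σ a →
      σ ∈ Sg → σ * swap a b ∈ Sg → σ * swap a b * swap a c ∈ Sg → σ * swap b c ∈ Sg →
      p σ a b * p (σ * swap a b) a c = p σ b c * p (σ * swap b c) a b := by
    intro σ a b c hab hac hbc hc hr m1 m2 m3 m4
    rw [hp _ _ _ hab, hp _ _ _ hac, hp _ _ _ hbc, hp _ _ _ hab]
    apply hsquare ⟨σ, a, b, hab⟩ ⟨σ * swap a b, a, c, hac⟩ ⟨σ, b, c, hbc⟩ ⟨σ * swap b c, a, b, hab⟩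
      _ m1 m2 m3 m4
    refine ⟨?_, rfl, rfl, rfl, (hz σ a b c hab hac hbc).symm, ?_, ?_⟩
    · intro h
      simp only [Prod.mk.injEq, GridRect.mk.injEq] at h
      exact hab h.1.2.1
    · show σ * swap a b * swap a c ≠ σ
      intro h
      rw [mul_assoc, mul_eq_left] at h
      have := congrArg (fun x => x c) h
      simp at this
      exact hbc this
    · intro q
      zify
      rw [dom_eq, dom_eq, dom_eq, dom_eq]
      simp only [Perm.mul_apply, swap_apply_left, swap_apply_right,
        swap_apply_of_ne_of_ne hac.symm hbc.symm, swap_apply_of_ne_of_ne hab hac]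
      rw [cycInd_add hc, cycInd_add hr]
      ring
  have hT1 : ∀ σ a b c, a ≠ b → a ≠ c → b ≠ c → b - a < c - a →
      σ ∈ Sg → σ * swap a b ∈ Sg → σ * swap a b * swap a c ∈ Sg → σ * swap b c ∈ Sg →
      p σ a b * p (σ * swap a b) a c = p σ b c * p (σ * swap b c) a b := by
    intro σ a b c hab hac hbc hc m1 m2 m3 m4
    rcases cyc_total' (σ.injective.ne hab) (σ.injective.ne hac) (σ.injective.ne hbc) with hr | hr
    · exact hT0 σ a b c hab hac hbc hc hr m1 m2 m3 m4
    · have e := hz σ a b c hab hac hbc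
      have h := hT0 (σ * swap b c) a b c hab hac hbc hc
        (by simpa [swap_apply_of_ne_of_ne hab hac] using hr) m4 (by rwa [← e])
        (by rwa [← e, hss]) (by rwa [hss])
      rw [hss, hsame σ b c hbc m1 m4, ← e, hsame (σ * swap a b) a c hac m2 m3] at h
      generalize p σ a b = x1 at h ⊢
      generalize p (σ * swap a b) a c = x2 at h ⊢
      generalize p σ b c = x3 at h ⊢
      generalize p (σ * swap b c) a b = x4 at h ⊢
      revert x1 x2 x3 x4; decide
  have hT : ∀ σ a b c, a ≠ b → a ≠ c → b ≠ c →
      σ ∈ Sg → σ * swap a b ∈ Sg → σ * swap a b * swap a c ∈ Sg → σ * swap b c ∈ Sg →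
      p σ a b * p (σ * swap a b) a c = p σ b c * p (σ * swap b c) a b := by
    intro σ a b c hab hac hbc m1 m2 m3 m4
    rcases cyc_total hab hac hbc with hc | hc
    · exact hT1 σ a b c hab hac hbc hc m1 m2 m3 m4
    · have e := hz σ a b c hab hac hbc
      have e2 : σ * swap a b * swap b a = σ := by rw [swap_comm b a, hss]
      have h := hT1 (σ * swap a b) b a c hab.symm hbc hac hc m2 (by rwa [e2]) (by rwa [e2]) m3
      rw [e2, e, hsym (σ * swap b c * swap a b) b a hab.symm (by rwa [← e])
        (by rwa [swap_comm b a, hss]), hsame (σ * swap b c) a b hab m4 (by rwa [← e]),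
        hsym (σ * swap a b) b a hab.symm m2 (by rwa [e2]), hsame σ a b hab m1 m2] at h
      generalize p σ a b = x1 at h ⊢
      generalize p (σ * swap a b) a c = x2 at h ⊢
      generalize p σ b c = x3 at h ⊢
      generalize p (σ * swap b c) a b = x4 at h ⊢
      revert x1 x2 x3 x4; decide
  have hD : ∀ σ i j k l, i ≠ j → k ≠ l → k ≠ i → k ≠ j → l ≠ i → l ≠ j →
      σ ∈ Sg → σ * swap i j ∈ Sg → σ * swap i j * swap k l ∈ Sg → σ * swap k l ∈ Sg →
      p σ i j * p (σ * swap i j) k l = p σ k l * p (σ * swap k l) i j := by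
    intro σ i j k l hij hkl hki hkj hli hlj m1 m2 m3 m4
    rw [hp _ _ _ hij, hp _ _ _ hkl, hp _ _ _ hkl, hp _ _ _ hij]
    apply hsquare ⟨σ, i, j, hij⟩ ⟨σ * swap i j, k, l, hkl⟩ ⟨σ, k, l, hkl⟩ ⟨σ * swap k l, i, j, hij⟩
      _ m1 m2 m3 m4
    refine ⟨?_, rfl, rfl, rfl, ?_, ?_, ?_⟩
    · intro h
      simp only [Prod.mk.injEq, GridRect.mk.injEq] at h
      exact hki h.1.2.1.symm
    · show σ * swap k l * swap i j = σ * swap i j * swap k l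
      rw [mul_assoc, mul_assoc]
      congr 1
      ext v; simp only [Perm.mul_apply, swap_apply_def]; grind
    · show σ * swap i j * swap k l ≠ σ
      intro h
      rw [mul_assoc, mul_eq_left] at h
      have := congrArg (fun x => x i) h
      simp [swap_apply_of_ne_of_ne hki.symm hli.symm] at this
      exact hij this.symm
    · intro q
      zify
      rw [dom_eq, dom_eq, dom_eq, dom_eq]
      simp only [Perm.mul_apply, swap_apply_of_ne_of_ne hki hkj, swap_apply_of_ne_of_ne hli hlj,
        swap_apply_of_ne_of_ne hki.symm hli.symm, swap_apply_of_ne_of_ne hkj.symm hlj.symm]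
      ring
  have hC1 : ∀ σ i j k l, i ≠ j → k ≠ l → (k = i ∨ k = j) → σ ∈ Sg → σ * swap i j ∈ Sg →
      σ * swap i j * swap k l ∈ Sg →
        σ * swap (swap i j k) (swap i j l) ∈ Sg →
        p σ i j * p (σ * swap i j) k l =
        p σ (swap i j k) (swap i j l) * p (σ * swap (swap i j k) (swap i j l)) i j := by
    intro σ i j k l hij hkl hk m1 m2 m3 m4
    rcases hk with rfl | rfl
    · by_cases h2 : l = j
      · subst h2
        rw [swap_apply_left, swap_apply_right, swap_comm l k, hsym σ k l hij m1 m2]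
      · rw [swap_apply_left, swap_apply_of_ne_of_ne hkl.symm h2] at m4 ⊢
        exact hT σ k j l hij hkl (Ne.symm h2) m1 m2 m3 m4
    · by_cases h2 : l = i
      · subst h2
        rw [swap_apply_left, swap_apply_right, hsame σ l k hij m1 m2,
          hsym (σ * swap l k) k l hij.symm m2 (by rwa [swap_comm k l, hss]),
          hsame σ l k hij m1 m2]
      · rw [swap_apply_right, swap_apply_of_ne_of_ne h2 hkl.symm] at m4 ⊢
        have e := hz σ k i l hij.symm hkl (Ne.symm h2)
        rw [swap_comm k i] at e
        have h := hT σ k i l hij.symm hkl (Ne.symm h2) m1 (by rwa [swap_comm]) (by rwa [swap_comm k i])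
          m4
        rw [swap_comm k i, hsym σ k i hij.symm m1 (by rwa [swap_comm]),
          hsym (σ * swap i l) k i hij.symm m4 (by rw [swap_comm k i, ← e]; exact m3)] at h
        exact h
  refine ⟨p, ?_, hsym, hsame, ?_⟩
  · intro r h1 h2
    rw [hp r.perm r.i r.j r.hij]
    show S' r = ((toUnit (S r) * toUnit (S' r) : ℤˣ) : ℤ) * S r
    push_cast
    rw [toUnit_val (v r ⟨h1, h2⟩), toUnit_val (v' r ⟨h1, h2⟩)]
    rcases v r ⟨h1, h2⟩ with h | h <;> rw [h] <;> ring
  · intro σ i j k l hij hkl m1 m2 m3 m4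
    by_cases hk : k = i ∨ k = j
    · exact hC1 σ i j k l hij hkl hk m1 m2 m3 m4
    by_cases hl : l = i ∨ l = j
    · have h := hC1 σ i j l k hij hkl.symm hl m1 m2 (by rwa [swap_comm l k])
        (by rwa [swap_comm (swap i j l)])
      rw [hsym (σ * swap i j) k l hkl m2 m3, h, swap_comm (swap i j l) (swap i j k),
        hsym σ (swap i j k) (swap i j l) ((swap i j).injective.ne hkl) m1 m4]
    · push Not at hk hl
      rw [swap_apply_of_ne_of_ne hk.1 hk.2, swap_apply_of_ne_of_ne hl.1 hl.2] at m4 ⊢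
      exact hD σ i j k l hij hkl hk.1 hk.2 hl.1 hl.2 m1 m2 m3 m4

lemma units_aux3 (a b x y s1 s2 s3 s4 : ℤˣ) (h : a * x = y * b) (ha : a = s1 * s2)
    (hb : b = s3 * s4) : x * s2 * s4 = y * s1 * s3 := by
  revert a b x y s1 s2 s3 s4; decide

lemma units_aux4 (w w' u u' f : ℤˣ) (hw : w' = w) (h : u' = u * f) : f = w * u * (w' * u') := by
  revert w w' u u' f; decide

open Equiv in
lemma gauge_unique (m n : ℕ) (hm : 1 ≤ m) (hn : 1 ≤ n) (S S' : GridRect (m + n) → ℤ)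
    (hS : IsSignAssignment (FSet m n) S) (hS' : IsSignAssignment (FSet m n) S') :
    GaugeEquiv (FSet m n) S S' := by
  classical
  obtain ⟨p, hval, hsym, hsame, hC⟩ := ratio_flat (GenSet m n) S S' hS hS'
  let b : Fin (m + n) → Bool := fun j => decide ((j : ℕ) < m)
  have hbiff : ∀ i j, b i = b j ↔ ((i : ℕ) < m ↔ (j : ℕ) < m) := by
    intro i j; simp [b]
  have hswb : ∀ i j, b i = b j → ∀ k, ((swap i j k : Fin (m + n)) : ℕ) < m ↔ (k : ℕ) < m := by
    intro i j hb k
    rw [hbiff] at hb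
    rw [swap_apply_def]; split_ifs with h1 h2
    · rw [h1]; exact hb.symm
    · rw [h2]; exact hb
    · rfl
  have hcl : ∀ σ i j, b i = b j → σ ∈ GenSet m n → σ * swap i j ∈ GenSet m n := by
    intro σ i j hb h k
    have h1 := h (swap i j k)
    have h2 := hswb i j hb k
    refine ⟨fun hk => h1.1 (h2.2 hk), fun hk => h1.2 ?_⟩
    by_contra hlt
    push Not at hlt
    exact absurd (h2.1 hlt) (by omega)
  have hss : ∀ (σ : Perm (Fin (m + n))) i j, σ * swap i j * swap i j = σ := by simp [mul_assoc]
  have hcl' : ∀ σ i j, b i = b j → (σ * swap i j ∈ GenSet m n ↔ σ ∈ GenSet m n) := by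
    intro σ i j hb
    refine ⟨fun h => ?_, hcl σ i j hb⟩
    have := hcl _ i j hb h
    rwa [hss] at this
  have hbs : ∀ i j k l, b i = b j → b k = b l → b (swap i j k) = b (swap i j l) := by
    intro i j k l hb hb'
    rw [hbiff, hswb i j hb, hswb i j hb, ← hbiff]; exact hb'
  obtain ⟨u, hu⟩ := flat_exact b (fun σ i j => if σ ∈ GenSet m n then p σ i j else 1)
    (by
      intro σ i j hij hb
      by_cases h : σ ∈ GenSet m n
      · simp only [h, if_true]; exact hsym σ i j hij h (hcl σ i j hb h)
      · simp [h])
    (by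
      intro σ i j hij hb
      simp only [hcl' σ i j hb]
      by_cases h : σ ∈ GenSet m n
      · simp only [h, if_true]; rw [hsame σ i j hij h (hcl σ i j hb h)]; exact Int.units_mul_self _
      · simp [h])
    (by
      intro σ i j k l hij hb hkl hb'
      have hb'' := hbs i j k l hb hb'
      simp only [hcl' σ i j hb, hcl' σ _ _ hb'']
      by_cases h : σ ∈ GenSet m n
      · simp only [h, if_true]
        exact hC σ i j k l hij hkl h (hcl _ _ _ hb h) (hcl _ _ _ hb' (hcl _ _ _ hb h))
          (hcl _ _ _ hb'' h)
      · simp [h])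
  have hu' : ∀ σ i j, i ≠ j → b i = b j → σ ∈ GenSet m n → u (σ * swap i j) = u σ * p σ i j := by
    intro σ i j hij hb h
    have := hu σ i j hij hb
    simpa [h] using this
  let M0 : Fin (m + n) := ⟨m - 1, by omega⟩
  let M1 : Fin (m + n) := ⟨m, by omega⟩
  have hM : M0 ≠ M1 := by simp only [M0, M1, ne_eq, Fin.mk.injEq]; omega
  let c : Perm (Fin (m + n)) → ℤˣ := fun σ =>
    p σ (σ⁻¹ M0) (σ⁻¹ M1) * u σ * u (σ * swap (σ⁻¹ M0) (σ⁻¹ M1))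
  have hIJ : ∀ σ : Perm (Fin (m + n)), σ⁻¹ M0 ≠ σ⁻¹ M1 := fun σ => (σ⁻¹).injective.ne hM
  have hmem : ∀ σ ∈ GenSet m n, σ * swap (σ⁻¹ M0) (σ⁻¹ M1) ∈ GenSet m n := by
    intro σ h k
    have hk := h k
    have e : (σ * swap (σ⁻¹ M0) (σ⁻¹ M1)) k = swap M0 M1 (σ k) := by
      rw [swap_apply_apply]; simp
    rw [e, swap_apply_def]
    split_ifs with h1 h2
    · simp only [M1]; omega
    · simp only [M0]; omega
    · exact hk
  have hinv : ∀ (σ : Perm (Fin (m + n))) i j r, (σ * swap i j)⁻¹ r = swap i j (σ⁻¹ r) := by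
    intro σ i j r; simp [mul_inv_rev]
  have hii : ∀ (σ : Perm (Fin (m + n))) x, σ⁻¹ (σ x) = x := fun σ x => by simp
  have hc : ∀ σ i j, i ≠ j → b i = b j → σ ∈ GenSet m n → c (σ * swap i j) = c σ := by
    intro σ i j hij hb h
    simp only [c, hinv]
    have hI := hIJ σ
    have hm' := hmem σ h
    have hm2 := hmem _ (hcl σ i j hb h)
    simp only [hinv] at hm2
    generalize σ⁻¹ M0 = I at *
    generalize σ⁻¹ M1 = J at *
    have hI' : swap i j I ≠ swap i j J := (swap i j).injective.ne hI
    have key := hC σ i j (swap i j I) (swap i j J) hij hI' h (hcl σ i j hb h) hm2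
      (by simpa using hm')
    simp only [swap_apply_self] at key
    have e : σ * swap i j * swap (swap i j I) (swap i j J) = σ * swap I J * swap i j := by
      rw [swap_apply_apply]; simp [mul_assoc]
    rw [e]
    have f1 := hu' σ i j hij hb h
    have f2 := hu' (σ * swap I J) i j hij hb hm'
    refine units_aux3 _ _ _ _ _ _ _ _ key ?_ ?_
    · rw [f1, ← mul_assoc, Int.units_mul_self, one_mul]
    · rw [f2, ← mul_assoc, Int.units_mul_self, one_mul]
  let w : Perm (Fin (m + n)) → ℤˣ := fun σ => if ((σ⁻¹ M1 : Fin (m + n)) : ℕ) < m then c σ else 1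
  have hmain : ∀ σ i j, i ≠ j → σ ∈ GenSet m n → σ * swap i j ∈ GenSet m n →
      p σ i j = w σ * u σ * (w (σ * swap i j) * u (σ * swap i j)) := by
    intro σ i j hij h h'
    by_cases hb : b i = b j
    · refine units_aux4 _ _ _ _ _ ?_ (hu' σ i j hij hb h)
      simp only [w, hinv, hswb i j hb, hc σ i j hij hb h]
    · rw [hbiff] at hb
      have a1 := h i
      have a2 := h j
      have a3 := h' i
      have a4 := h' j
      simp only [Perm.mul_apply, swap_apply_left, swap_apply_right] at a3 a4
      have hne : (σ i : ℕ) ≠ σ j := fun e => hij (σ.injective (Fin.ext e))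
      have hcase : (σ i = M0 ∧ σ j = M1) ∨ (σ i = M1 ∧ σ j = M0) := by
        simp only [Fin.ext_iff, M0, M1]; omega
      have hcs : c σ = p σ i j * u σ * u (σ * swap i j) ∧
          c (σ * swap i j) = p σ i j * u σ * u (σ * swap i j) := by
        have z1 := hsame σ i j hij h h'
        have z2 := hsym σ i j hij h h'
        have z3 := hsym (σ * swap i j) i j hij h' (by rwa [hss])
        rcases hcase with ⟨q1, q2⟩ | ⟨q1, q2⟩ <;> simp only [c, hinv, ← q1, ← q2, hii,
          swap_apply_left, swap_apply_right, swap_comm j i, hss]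
        · refine ⟨trivial, ?_⟩
          rw [← z3, z1, mul_right_comm]
        · refine ⟨by rw [z2], ?_⟩
          rw [z1, mul_right_comm]
      have hJ : (((σ⁻¹ M1 : Fin (m + n)) : ℕ) < m ∧ ¬ ((((σ * swap i j)⁻¹ M1 : Fin (m + n)) : ℕ) < m)) ∨
          (¬ (((σ⁻¹ M1 : Fin (m + n)) : ℕ) < m) ∧ ((((σ * swap i j)⁻¹ M1 : Fin (m + n)) : ℕ) < m)) := by
        rcases hcase with ⟨q1, q2⟩ | ⟨q1, q2⟩
        · rw [hinv, ← q2, hii, swap_apply_right]; omega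
        · rw [hinv, ← q1, hii, swap_apply_left]; omega
      have hww : w σ * w (σ * swap i j) = p σ i j * u σ * u (σ * swap i j) := by
        rcases hJ with ⟨j1, j2⟩ | ⟨j1, j2⟩ <;> simp only [w, j1, j2, if_true, if_false, hcs.1, hcs.2,
          mul_one, one_mul]
      generalize w σ = w1 at *
      generalize w (σ * swap i j) = w2 at *
      generalize u σ = u1 at *
      generalize u (σ * swap i j) = u2 at *
      generalize p σ i j = p1 at *
      clear * - hww
      revert w1 w2 u1 u2 p1; decide
  refine ⟨fun σ => ((w σ * u σ : ℤˣ) : ℤ), fun σ => ?_, ?_⟩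
  · rcases Int.units_eq_one_or (w σ * u σ) with h | h <;> simp only [h] <;> simp
  · rintro r ⟨h1, h2⟩
    rw [hval r h1 h2, hmain r.perm r.i r.j r.hij h1 h2]
    show _ = ((w r.perm * u r.perm : ℤˣ) : ℤ) * S r *
      ((w (r.perm * swap r.i r.j) * u (r.perm * swap r.i r.j) : ℤˣ) : ℤ)
    push_cast
    ring

/-- There exists a sign assignment on `F'`, and any two sign assignments on `F'` are
gauge equivalent. -/
theorem sign_assignment_exists_unique_on_FSet (m n : ℕ) (hm : 1 ≤ m) (hn : 1 ≤ n) :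
    (∃ S : GridRect (m + n) → ℤ, IsSignAssignment (FSet m n) S) ∧
    (∀ S S' : GridRect (m + n) → ℤ, IsSignAssignment (FSet m n) S →
      IsSignAssignment (FSet m n) S' → GaugeEquiv (FSet m n) S S') := by
  exact ⟨exists_sign _ _, fun S S' h h' => gauge_unique m n hm hn S S' h h'⟩
end

section
/- For all integers m, n ≥ 1, setting N = m + n, there exists a map S from the set of planar thin rectangles in F' to {1, −1} satisfying (Sq) and (Hex), and any two such maps are gauge equivalent. -/
namespace GridRect

variable {N : ℕ}

/-- A rectangle is planar if `i < j` and `σ(i) < σ(j)`. -/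
def Planar (r : GridRect N) : Prop := r.i < r.j ∧ r.perm r.i < r.perm r.j

/-- A planar rectangle is thin if `j = i + 1`. -/
def Thin (r : GridRect N) : Prop := (r.j : ℕ) = (r.i : ℕ) + 1

end GridRect

/-- The set of planar thin rectangles in `F'`. -/
def PTSet (m n : ℕ) : Set (GridRect (m + n)) :=
  {r | r ∈ FSet m n ∧ r.Planar ∧ r.Thin}

/-- The column `c` as an element of `Fin N`, given `c + 1 < N`. -/
def colFin {N : ℕ} (c : ℕ) (hc : c + 1 < N) : Fin N := ⟨c, Nat.lt_of_succ_lt hc⟩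

/-- The column `c + 1` as an element of `Fin N`, given `c + 1 < N`. -/
def colFin' {N : ℕ} (c : ℕ) (hc : c + 1 < N) : Fin N := ⟨c + 1, hc⟩

theorem colNe {N : ℕ} (c : ℕ) (hc : c + 1 < N) : colFin c hc ≠ colFin' c hc := by
  simp only [colFin, colFin', ne_eq, Fin.mk.injEq]
  omega

/-- The generator `σ·τ_c = σ^{c,c+1}`. -/
def tmul {N : ℕ} (σ : Equiv.Perm (Fin N)) (c : ℕ) (hc : c + 1 < N) : Equiv.Perm (Fin N) :=
  (Equiv.swap (colFin c hc) (colFin' c hc)).trans σ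

/-- The unique planar thin rectangle `e(σ, c)` connecting `σ` and `σ·τ_c`: it is
`r(σ, c, c+1)` if `σ(c) < σ(c+1)`, and `r(σ·τ_c, c, c+1)` otherwise. -/
def edgeRect {N : ℕ} (σ : Equiv.Perm (Fin N)) (c : ℕ) (hc : c + 1 < N) : GridRect N :=
  if σ (colFin c hc) < σ (colFin' c hc) then ⟨σ, colFin c hc, colFin' c hc, colNe c hc⟩
  else ⟨tmul σ c hc, colFin c hc, colFin' c hc, colNe c hc⟩

/-- Property (Sq) for a sign function on the planar thin rectangles in `F'`. -/
def SqCond (m n : ℕ) (S : GridRect (m + n) → ℤ) : Prop :=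
  ∀ (σ : Equiv.Perm (Fin (m + n))) (c d : ℕ) (hc : c + 1 < m + n) (hd : d + 1 < m + n),
    (c + 2 ≤ d ∨ d + 2 ≤ c) →
    σ ∈ GenSet m n → tmul σ c hc ∈ GenSet m n → tmul σ d hd ∈ GenSet m n →
    tmul (tmul σ c hc) d hd ∈ GenSet m n →
    S (edgeRect σ c hc) * S (edgeRect (tmul σ c hc) d hd) *
      S (edgeRect σ d hd) * S (edgeRect (tmul σ d hd) c hc) = -1

/-- Property (Hex) for a sign function on the planar thin rectangles in `F'`. -/
def HexCond (m n : ℕ) (S : GridRect (m + n) → ℤ) : Prop :=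
  ∀ (σ : Equiv.Perm (Fin (m + n))) (c : ℕ) (hc1 : c + 1 < m + n) (hc2 : c + 1 + 1 < m + n),
    σ ∈ GenSet m n → tmul σ c hc1 ∈ GenSet m n →
    tmul (tmul σ c hc1) (c + 1) hc2 ∈ GenSet m n →
    tmul (tmul (tmul σ c hc1) (c + 1) hc2) c hc1 ∈ GenSet m n →
    tmul (tmul σ (c + 1) hc2) c hc1 ∈ GenSet m n →
    tmul σ (c + 1) hc2 ∈ GenSet m n →
    S (edgeRect σ c hc1) * S (edgeRect (tmul σ c hc1) (c + 1) hc2) *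
      S (edgeRect (tmul (tmul σ c hc1) (c + 1) hc2) c hc1) *
      S (edgeRect (tmul (tmul (tmul σ c hc1) (c + 1) hc2) c hc1) (c + 1) hc2) *
      S (edgeRect (tmul (tmul σ (c + 1) hc2) c hc1) c hc1) *
      S (edgeRect (tmul σ (c + 1) hc2) (c + 1) hc2) = 1

/-! ### Elementary facts on `tmul` and `edgeRect` -/

theorem tmul_left {N : ℕ} (σ : Equiv.Perm (Fin N)) (c : ℕ) (hc : c + 1 < N) :
    tmul σ c hc (colFin c hc) = σ (colFin' c hc) := by
  simp [tmul]

theorem tmul_right {N : ℕ} (σ : Equiv.Perm (Fin N)) (c : ℕ) (hc : c + 1 < N) :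
    tmul σ c hc (colFin' c hc) = σ (colFin c hc) := by
  simp [tmul]

theorem tmul_other {N : ℕ} (σ : Equiv.Perm (Fin N)) (c : ℕ) (hc : c + 1 < N) (k : Fin N)
    (h1 : (k : ℕ) ≠ c) (h2 : (k : ℕ) ≠ c + 1) : tmul σ c hc k = σ k := by
  simp only [tmul, Equiv.trans_apply]
  rw [Equiv.swap_apply_of_ne_of_ne]
  · intro h; apply h1; rw [h]; rfl
  · intro h; apply h2; rw [h]; rfl

theorem tmul_tmul {N : ℕ} (σ : Equiv.Perm (Fin N)) (c : ℕ) (hc : c + 1 < N) :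
    tmul (tmul σ c hc) c hc = σ := by
  ext k; simp [tmul]

/-- Explicit value of `tmul`. -/
theorem tmul_apply {N : ℕ} (σ : Equiv.Perm (Fin N)) (c : ℕ) (hc : c + 1 < N) (k : Fin N) :
    tmul σ c hc k = if (k : ℕ) = c then σ (colFin' c hc) else
      if (k : ℕ) = c + 1 then σ (colFin c hc) else σ k := by
  split_ifs with h1 h2
  · have : k = colFin c hc := Fin.ext h1
    rw [this, tmul_left]
  · have : k = colFin' c hc := Fin.ext h2
    rw [this, tmul_right]
  · exact tmul_other σ c hc k h1 h2

theorem tmul_comm {N : ℕ} (σ : Equiv.Perm (Fin N)) (c d : ℕ) (hc : c + 1 < N) (hd : d + 1 < N)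
    (h : c + 2 ≤ d ∨ d + 2 ≤ c) :
    tmul (tmul σ c hc) d hd = tmul (tmul σ d hd) c hc := by
  ext k
  congr 1
  simp only [tmul_apply, colFin, colFin']
  split_ifs <;> first | rfl | omega

theorem tmul_braid {N : ℕ} (σ : Equiv.Perm (Fin N)) (c : ℕ) (hc : c + 1 < N)
    (hd : c + 1 + 1 < N) :
    tmul (tmul (tmul σ c hc) (c + 1) hd) c hc =
      tmul (tmul (tmul σ (c + 1) hd) c hc) (c + 1) hd := by
  ext k
  congr 1
  simp only [tmul_apply, colFin, colFin']
  split_ifs <;> first | rfl | omega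

theorem edgeRect_tmul {N : ℕ} (σ : Equiv.Perm (Fin N)) (c : ℕ) (hc : c + 1 < N) :
    edgeRect (tmul σ c hc) c hc = edgeRect σ c hc := by
  have hne : σ (colFin c hc) ≠ σ (colFin' c hc) := fun h => colNe c hc (σ.injective h)
  unfold edgeRect
  rw [tmul_left, tmul_right, tmul_tmul]
  rcases lt_or_gt_of_ne hne with h | h
  · rw [if_neg (not_lt.mpr h.le), if_pos h]
  · rw [if_pos h, if_neg (not_lt.mpr h.le)]

/-! ### Existence -/

/-- The comparison sign of two labels. -/
def chi {N : ℕ} (t s : Fin N × Fin N) : ℤ := if toLex t < toLex s then -1 else 1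

theorem chi_self {N : ℕ} (t : Fin N × Fin N) : chi t t = 1 := by simp [chi]

theorem chi_mul {N : ℕ} {t s : Fin N × Fin N} (h : t ≠ s) : chi t s * chi s t = -1 := by
  have h' : toLex t ≠ toLex s := fun e => h (toLex.injective e)
  rcases lt_or_gt_of_ne h' with h | h
  · simp [chi, h, not_lt.mpr h.le]
  · simp [chi, h, not_lt.mpr h.le]

theorem chi_pm {N : ℕ} (t s : Fin N × Fin N) : chi t s = 1 ∨ chi t s = -1 := by
  unfold chi; split_ifs <;> simp

/-- The label (ordered pair of values) of an unordered pair of values. -/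
def prl {N : ℕ} (x y : Fin N) : Fin N × Fin N := (min x y, max x y)

theorem prl_comm {N : ℕ} (x y : Fin N) : prl x y = prl y x := by
  simp [prl, min_comm, max_comm]

theorem prl_eq {N : ℕ} {x y z w : Fin N} (h : prl x y = prl z w) :
    (x = z ∧ y = w) ∨ (x = w ∧ y = z) := by
  simp only [prl, Prod.mk.injEq] at h
  obtain ⟨h1, h2⟩ := h
  rcases le_total x y with a | a <;> rcases le_total z w with b | b <;>
    simp only [min_eq_left, min_eq_right, max_eq_left, max_eq_right, a, b] at h1 h2 <;>
    simp [h1, h2]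

/-- The product over the inversions of `σ` of the comparison signs with `t`. -/
def eps {N : ℕ} (σ : Equiv.Perm (Fin N)) (t : Fin N × Fin N) : ℤ :=
  ∏ s : Fin N × Fin N, if s.1 < s.2 ∧ σ.symm s.2 < σ.symm s.1 then chi t s else 1

theorem eps_pm {N : ℕ} (σ : Equiv.Perm (Fin N)) (t : Fin N × Fin N) :
    eps σ t = 1 ∨ eps σ t = -1 := by
  unfold eps
  refine Finset.prod_induction _ (fun z : ℤ => z = 1 ∨ z = -1) ?_ (Or.inl rfl) ?_
  · rintro a b (rfl | rfl) (rfl | rfl) <;> simp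
  · intro s _
    split_ifs
    · exact chi_pm t s
    · exact Or.inl rfl

theorem tmul_symm_apply {N : ℕ} (σ : Equiv.Perm (Fin N)) (c : ℕ) (hc : c + 1 < N) (x : Fin N) :
    (tmul σ c hc).symm x = Equiv.swap (colFin c hc) (colFin' c hc) (σ.symm x) := by
  simp [tmul]

theorem swap_val {N : ℕ} (c : ℕ) (hc : c + 1 < N) (k : Fin N) :
    ((Equiv.swap (colFin c hc) (colFin' c hc) k : Fin N) : ℕ) =
      if (k : ℕ) = c then c + 1 else if (k : ℕ) = c + 1 then c else k := by
  rw [Equiv.swap_apply_def]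
  simp only [Fin.ext_iff, colFin, colFin']
  split_ifs <;> rfl

theorem eps_tmul {N : ℕ} (σ : Equiv.Perm (Fin N)) (c : ℕ) (hc : c + 1 < N)
    (t : Fin N × Fin N) :
    eps (tmul σ c hc) t = eps σ t * chi t (prl (σ (colFin c hc)) (σ (colFin' c hc))) := by
  set L := prl (σ (colFin c hc)) (σ (colFin' c hc)) with hL
  have h1 : chi t L = ∏ s : Fin N × Fin N, if s = L then chi t s else 1 := by
    rw [Finset.prod_ite_eq']; simp
  rw [h1]
  unfold eps
  rw [← Finset.prod_mul_distrib]
  refine Finset.prod_congr rfl ?_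
  rintro ⟨x, y⟩ _
  have hcc : chi t (x, y) * chi t (x, y) = 1 := by
    rcases chi_pm t (x, y) with h | h <;> simp [h]
  obtain ⟨p, rfl⟩ := σ.surjective x
  obtain ⟨q, rfl⟩ := σ.surjective y
  simp only [tmul_symm_apply, Equiv.symm_apply_apply]
  have hA : (Equiv.swap (colFin c hc) (colFin' c hc) q <
      Equiv.swap (colFin c hc) (colFin' c hc) p) ↔
      (if (q : ℕ) = c then c + 1 else if (q : ℕ) = c + 1 then c else (q : ℕ)) <
      (if (p : ℕ) = c then c + 1 else if (p : ℕ) = c + 1 then c else (p : ℕ)) := by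
    rw [Fin.lt_def, swap_val, swap_val]
  simp only [hA]
  by_cases hxy : σ p < σ q
  · by_cases hE : (σ p, σ q) = L
    · have hpq : (p = colFin c hc ∧ q = colFin' c hc) ∨
          (p = colFin' c hc ∧ q = colFin c hc) := by
        have : prl (σ p) (σ q) = prl (σ (colFin c hc)) (σ (colFin' c hc)) := by
          rw [← hL, ← hE]; simp [prl, hxy.le]
        rcases prl_eq this with ⟨a, b⟩ | ⟨a, b⟩
        · exact Or.inl ⟨σ.injective a, σ.injective b⟩
        · exact Or.inr ⟨σ.injective a, σ.injective b⟩
      rcases hpq with ⟨rfl, rfl⟩ | ⟨rfl, rfl⟩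
      · have hn : ¬ colFin' c hc < colFin c hc := by
          rw [Fin.lt_def]; simp only [colFin, colFin']; omega
        simp only [hxy, hE, hn]
        simp [colFin, colFin']
      · have hn : colFin c hc < colFin' c hc := by
          rw [Fin.lt_def]; simp only [colFin, colFin']; omega
        simp only [hE] at hcc
        simp only [hxy, hE, hn]
        simp [colFin, colFin', hcc]
    · have hne : ¬ (((p : ℕ) = c ∧ (q : ℕ) = c + 1) ∨ ((p : ℕ) = c + 1 ∧ (q : ℕ) = c)) := by
        rintro (⟨a, b⟩ | ⟨a, b⟩)
        · have e1 : p = colFin c hc := Fin.ext a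
          have e2 : q = colFin' c hc := Fin.ext b
          apply hE
          rw [hL, ← e1, ← e2]; simp [prl, hxy.le]
        · have e1 : p = colFin' c hc := Fin.ext a
          have e2 : q = colFin c hc := Fin.ext b
          apply hE
          rw [hL, ← e1, ← e2]; simp [prl, hxy.le]
      have hiff : ((if (q : ℕ) = c then c + 1 else if (q : ℕ) = c + 1 then c else (q : ℕ)) <
          (if (p : ℕ) = c then c + 1 else if (p : ℕ) = c + 1 then c else (p : ℕ))) ↔ q < p := by
        rw [Fin.lt_def]
        split_ifs <;> omega
      simp only [hiff]
      simp [hE]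
  · have hE : (σ p, σ q) ≠ L := by
      intro h
      apply hxy
      have hne : σ (colFin c hc) ≠ σ (colFin' c hc) := fun h => colNe c hc (σ.injective h)
      simp only [hL, prl, Prod.mk.injEq] at h
      rw [h.1, h.2]
      exact min_lt_max.mpr hne
    simp [hxy, hE]

/-- The explicit sign. -/
def sgnG {N : ℕ} (σ : Equiv.Perm (Fin N)) (c : ℕ) (hc : c + 1 < N) : ℤ :=
  (-1) ^ c * eps σ (prl (σ (colFin c hc)) (σ (colFin' c hc)))

/-- The explicit sign assignment on rectangles. -/
def sgnS {N : ℕ} (r : GridRect N) : ℤ :=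
  (-1) ^ (r.i : ℕ) * eps r.perm (prl (r.perm r.i) (r.perm r.j))

theorem sgnG_tmul {N : ℕ} (σ : Equiv.Perm (Fin N)) (c : ℕ) (hc : c + 1 < N) :
    sgnG (tmul σ c hc) c hc = sgnG σ c hc := by
  unfold sgnG
  rw [tmul_left, tmul_right, prl_comm, eps_tmul, chi_self, mul_one]

theorem sgnS_edge {N : ℕ} (σ : Equiv.Perm (Fin N)) (c : ℕ) (hc : c + 1 < N) :
    sgnS (edgeRect σ c hc) = sgnG σ c hc := by
  unfold edgeRect
  split_ifs with h
  · rfl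
  · rw [← sgnG_tmul]; rfl

theorem sgnS_pm {N : ℕ} (r : GridRect N) : sgnS r = 1 ∨ sgnS r = -1 := by
  unfold sgnS
  rcases eps_pm r.perm (prl (r.perm r.i) (r.perm r.j)) with h | h <;>
    rcases neg_one_pow_eq_or ℤ (r.i : ℕ) with h' | h' <;> simp [h, h']

theorem sgnS_sq {m n : ℕ} : SqCond m n sgnS := by
  intro σ c d hc hd hcd _ _ _ _
  simp only [sgnS_edge]
  have a1 : tmul σ c hc (colFin d hd) = σ (colFin d hd) :=
    tmul_other _ _ _ _ (by simp only [colFin]; omega) (by simp only [colFin]; omega)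
  have a2 : tmul σ c hc (colFin' d hd) = σ (colFin' d hd) :=
    tmul_other _ _ _ _ (by simp only [colFin']; omega) (by simp only [colFin']; omega)
  have b1 : tmul σ d hd (colFin c hc) = σ (colFin c hc) :=
    tmul_other _ _ _ _ (by simp only [colFin]; omega) (by simp only [colFin]; omega)
  have b2 : tmul σ d hd (colFin' c hc) = σ (colFin' c hc) :=
    tmul_other _ _ _ _ (by simp only [colFin']; omega) (by simp only [colFin']; omega)
  simp only [sgnG, a1, a2, b1, b2, eps_tmul]
  set P := prl (σ (colFin c hc)) (σ (colFin' c hc)) with hP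
  set Q := prl (σ (colFin d hd)) (σ (colFin' d hd)) with hQ
  have hPQ : P ≠ Q := by
    intro h
    rcases prl_eq h with ⟨h, _⟩ | ⟨h, _⟩
    · have := congrArg Fin.val (σ.injective h)
      simp only [colFin] at this; omega
    · have := congrArg Fin.val (σ.injective h)
      simp only [colFin, colFin'] at this; omega
  have hx := chi_mul hPQ
  have e1 : ((-1 : ℤ) ^ c) * (-1) ^ c = 1 := by rw [← mul_pow]; simp
  have e2 : ((-1 : ℤ) ^ d) * (-1) ^ d = 1 := by rw [← mul_pow]; simp
  have e3 : eps σ P * eps σ P = 1 := by rcases eps_pm σ P with h | h <;> simp [h]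
  have e4 : eps σ Q * eps σ Q = 1 := by rcases eps_pm σ Q with h | h <;> simp [h]
  calc _ = (((-1 : ℤ) ^ c) * (-1) ^ c) * (((-1 : ℤ) ^ d) * (-1) ^ d) * (eps σ P * eps σ P) *
        (eps σ Q * eps σ Q) * (chi P Q * chi Q P) := by ring
    _ = -1 := by rw [e1, e2, e3, e4, hx]; norm_num

theorem sgnS_hex {m n : ℕ} : HexCond m n sgnS := by
  intro σ c hc hd _ _ _ _ _ _
  simp only [sgnS_edge]
  have h01 : σ (colFin c hc) ≠ σ (colFin' c hc) := fun h => colNe c hc (σ.injective h)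
  have h12 : σ (colFin' c hc) ≠ σ (colFin' (c + 1) hd) := fun h => by
    have := congrArg Fin.val (σ.injective h)
    simp only [colFin'] at this; omega
  have h02 : σ (colFin c hc) ≠ σ (colFin' (c + 1) hd) := fun h => by
    have := congrArg Fin.val (σ.injective h)
    simp only [colFin, colFin'] at this; omega
  have hm : colFin (c + 1) hd = colFin' c hc := rfl
  have k1 : ∀ ρ : Equiv.Perm (Fin (m + n)),
      tmul ρ c hc (colFin' (c + 1) hd) = ρ (colFin' (c + 1) hd) := fun ρ =>
    tmul_other _ _ _ _ (by simp only [colFin']; omega) (by simp only [colFin']; omega)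
  have k2 : ∀ ρ : Equiv.Perm (Fin (m + n)),
      tmul ρ (c + 1) hd (colFin c hc) = ρ (colFin c hc) := fun ρ =>
    tmul_other _ _ _ _ (by simp only [colFin]; omega) (by simp only [colFin]; omega)
  have k3 : ∀ ρ : Equiv.Perm (Fin (m + n)),
      tmul ρ (c + 1) hd (colFin' c hc) = ρ (colFin' (c + 1) hd) := fun ρ =>
    tmul_left ρ (c + 1) hd
  have k4 : ∀ ρ : Equiv.Perm (Fin (m + n)),
      tmul ρ (c + 1) hd (colFin' (c + 1) hd) = ρ (colFin' c hc) := fun ρ =>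
    tmul_right ρ (c + 1) hd
  simp only [sgnG, hm, eps_tmul, k1, k2, k3, k4, tmul_left, tmul_right]
  generalize σ (colFin c hc) = x at *
  generalize σ (colFin' c hc) = y at *
  generalize σ (colFin' (c + 1) hd) = z at *
  rw [prl_comm y x, prl_comm z x, prl_comm z y]
  have hPQ : prl x y ≠ prl x z := fun h => by
    rcases prl_eq h with ⟨_, h⟩ | ⟨h, _⟩
    · exact h12 h
    · exact h02 h
  have hPR : prl x y ≠ prl y z := fun h => by
    rcases prl_eq h with ⟨h, _⟩ | ⟨h, _⟩
    · exact h01 h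
    · exact h02 h
  have hQR : prl x z ≠ prl y z := fun h => by
    rcases prl_eq h with ⟨h, _⟩ | ⟨h, _⟩
    · exact h01 h
    · exact h02 h
  generalize prl x y = P at *
  generalize prl x z = Q at *
  generalize prl y z = R at *
  have x1 := chi_mul hPQ
  have x2 := chi_mul hPR
  have x3 := chi_mul hQR
  simp only [chi_self]
  have e1 : ((-1 : ℤ) ^ c) * (-1) ^ c = 1 := by rw [← mul_pow]; simp
  have e3 : eps σ P * eps σ P = 1 := by rcases eps_pm σ P with h | h <;> simp [h]
  have e4 : eps σ Q * eps σ Q = 1 := by rcases eps_pm σ Q with h | h <;> simp [h]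
  have e5 : eps σ R * eps σ R = 1 := by rcases eps_pm σ R with h | h <;> simp [h]
  calc _ = -((((-1 : ℤ) ^ c) * (-1) ^ c) * (((-1 : ℤ) ^ c) * (-1) ^ c) *
        (((-1 : ℤ) ^ c) * (-1) ^ c) * (eps σ P * eps σ P) *
        (eps σ Q * eps σ Q) * (eps σ R * eps σ R) * (chi P Q * chi Q P) *
        (chi P R * chi R P) * (chi Q R * chi R Q)) := by ring
    _ = 1 := by rw [e1, e3, e4, e5, x1, x2, x3]; norm_num

/-! ### Uniqueness -/

/-- `σ` has a descent at `c`. -/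
def Desc {N : ℕ} (σ : Equiv.Perm (Fin N)) (c : ℕ) (hc : c + 1 < N) : Prop :=
  σ (colFin' c hc) < σ (colFin c hc)

/-- A measure which decreases along descents. -/
def msr {N : ℕ} (σ : Equiv.Perm (Fin N)) : ℕ := ∑ k : Fin N, (N - (k : ℕ)) * (σ k : ℕ)

theorem msr_lt {N : ℕ} (σ : Equiv.Perm (Fin N)) (c : ℕ) (hc : c + 1 < N) (h : Desc σ c hc) :
    msr (tmul σ c hc) < msr σ := by
  unfold msr
  have hne := colNe c hc
  have key : ∀ ρ : Equiv.Perm (Fin N), ∑ k : Fin N, (N - (k : ℕ)) * (ρ k : ℕ) =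
      (N - c) * (ρ (colFin c hc) : ℕ) + ((N - (c + 1)) * (ρ (colFin' c hc) : ℕ) +
      ∑ k ∈ (Finset.univ.erase (colFin c hc)).erase (colFin' c hc),
        (N - (k : ℕ)) * (ρ k : ℕ)) := by
    intro ρ
    rw [← Finset.add_sum_erase Finset.univ _ (Finset.mem_univ (colFin c hc)),
      ← Finset.add_sum_erase (Finset.univ.erase (colFin c hc)) _
        (Finset.mem_erase.mpr ⟨hne.symm, Finset.mem_univ _⟩)]
    rfl
  rw [key, key σ, tmul_left, tmul_right]
  have hs : ∑ k ∈ (Finset.univ.erase (colFin c hc)).erase (colFin' c hc),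
        (N - (k : ℕ)) * (tmul σ c hc k : ℕ) =
      ∑ k ∈ (Finset.univ.erase (colFin c hc)).erase (colFin' c hc),
        (N - (k : ℕ)) * (σ k : ℕ) := by
    refine Finset.sum_congr rfl fun k hk => ?_
    simp only [Finset.mem_erase] at hk
    rw [tmul_other]
    · intro e; exact hk.2.1 (Fin.ext e)
    · intro e; exact hk.1 (Fin.ext e)
  rw [hs]
  have h' : (σ (colFin' c hc) : ℕ) < σ (colFin c hc) := h
  obtain ⟨q, hq⟩ : ∃ q, N - c = q + 1 := ⟨N - c - 1, by omega⟩
  have hq' : N - (c + 1) = q := by omega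
  rw [hq, hq']
  nlinarith

theorem gen_desc {m n : ℕ} {σ : Equiv.Perm (Fin (m + n))} (hσ : σ ∈ GenSet m n) (c : ℕ)
    (hc : c + 1 < m + n) (h : Desc σ c hc) : tmul σ c hc ∈ GenSet m n := by
  have h' : (σ (colFin' c hc) : ℕ) < σ (colFin c hc) := h
  intro k
  have h1 := hσ (colFin c hc)
  have h2 := hσ (colFin' c hc)
  have h3 := hσ k
  rw [tmul_apply]
  simp only [colFin, colFin'] at h1 h2 h' ⊢
  split_ifs <;> constructor <;> omega

open Classical in
/-- The gauge transformation attached to a sign function `W` on rectangles. -/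
noncomputable def gaugeU {N : ℕ} (W : GridRect N → ℤ) (σ : Equiv.Perm (Fin N)) : ℤ :=
  if h : ∃ c, ∃ hc : c + 1 < N, Desc σ c hc then
    W (edgeRect σ h.choose h.choose_spec.choose) *
      gaugeU W (tmul σ h.choose h.choose_spec.choose)
  else 1
termination_by msr σ
decreasing_by exact msr_lt σ _ _ h.choose_spec.choose_spec

theorem gaugeU_spec {N : ℕ} (W : GridRect N → ℤ) (σ : Equiv.Perm (Fin N))
    (h : ∃ c, ∃ hc : c + 1 < N, Desc σ c hc) :
    ∃ c, ∃ hc : c + 1 < N, Desc σ c hc ∧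
      gaugeU W σ = W (edgeRect σ c hc) * gaugeU W (tmul σ c hc) := by
  refine ⟨h.choose, h.choose_spec.choose, h.choose_spec.choose_spec, ?_⟩
  conv_lhs => rw [gaugeU]
  rw [dif_pos h]

theorem gaugeU_pm {N : ℕ} (W : GridRect N → ℤ) (hW : ∀ r, W r = 1 ∨ W r = -1) (k : ℕ) :
    ∀ σ : Equiv.Perm (Fin N), msr σ < k → gaugeU W σ = 1 ∨ gaugeU W σ = -1 := by
  induction k with
  | zero => intro σ h; omega
  | succ k ih =>
    intro σ hk
    by_cases h : ∃ c, ∃ hc : c + 1 < N, Desc σ c hc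
    · obtain ⟨c, hc, hd, e⟩ := gaugeU_spec W σ h
      have := msr_lt σ c hc hd
      rw [e]
      rcases hW (edgeRect σ c hc) with a | a <;>
        rcases ih (tmul σ c hc) (by omega) with b | b <;> simp [a, b]
    · left; rw [gaugeU, dif_neg h]

theorem pm_sq {a : ℤ} (h : a = 1 ∨ a = -1) : a * a = 1 := by
  rcases h with h | h <;> simp [h]

theorem desc_far {N : ℕ} {σ : Equiv.Perm (Fin N)} {c d : ℕ} {hc : c + 1 < N} {hd : d + 1 < N}
    (h : c + 2 ≤ d ∨ d + 2 ≤ c) (hdd : Desc σ d hd) : Desc (tmul σ c hc) d hd := by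
  unfold Desc
  rw [tmul_other, tmul_other]
  · exact hdd
  all_goals simp only [colFin, colFin']; omega

/-- The two evaluations at adjacent descents agree. -/
theorem hex_agree {m n : ℕ} (W : GridRect (m + n) → ℤ) (hW : ∀ r, W r = 1 ∨ W r = -1)
    (hhex : HexCond m n W) (σ : Equiv.Perm (Fin (m + n))) (hσ : σ ∈ GenSet m n)
    (ih : ∀ ρ ∈ GenSet m n, msr ρ < msr σ → ∀ c (hc : c + 1 < m + n), Desc ρ c hc →
      gaugeU W ρ = W (edgeRect ρ c hc) * gaugeU W (tmul ρ c hc))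
    (c : ℕ) (hc : c + 1 < m + n) (hd : c + 1 + 1 < m + n)
    (h1 : Desc σ c hc) (h2 : Desc σ (c + 1) hd) :
    W (edgeRect σ c hc) * gaugeU W (tmul σ c hc) =
      W (edgeRect σ (c + 1) hd) * gaugeU W (tmul σ (c + 1) hd) := by
  have hm : colFin (c + 1) hd = colFin' c hc := rfl
  have k1 : ∀ ρ : Equiv.Perm (Fin (m + n)),
      tmul ρ c hc (colFin' (c + 1) hd) = ρ (colFin' (c + 1) hd) := fun ρ =>
    tmul_other _ _ _ _ (by simp only [colFin']; omega) (by simp only [colFin']; omega)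
  have k2 : ∀ ρ : Equiv.Perm (Fin (m + n)),
      tmul ρ (c + 1) hd (colFin c hc) = ρ (colFin c hc) := fun ρ =>
    tmul_other _ _ _ _ (by simp only [colFin]; omega) (by simp only [colFin]; omega)
  have k3 : ∀ ρ : Equiv.Perm (Fin (m + n)),
      tmul ρ (c + 1) hd (colFin' c hc) = ρ (colFin' (c + 1) hd) := fun ρ =>
    tmul_left ρ (c + 1) hd
  have h1' : σ (colFin' c hc) < σ (colFin c hc) := h1
  have h2' : σ (colFin' (c + 1) hd) < σ (colFin' c hc) := h2
  have d1 : Desc (tmul σ c hc) (c + 1) hd := by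
    unfold Desc; rw [hm, k1, tmul_right]; exact h2'.trans h1'
  have d2 : Desc (tmul (tmul σ c hc) (c + 1) hd) c hc := by
    unfold Desc; rw [k2, k3, k1, tmul_left]; exact h2'
  have d3 : Desc (tmul σ (c + 1) hd) c hc := by
    unfold Desc; rw [k2, k3]; exact h2'.trans h1'
  have d4 : Desc (tmul (tmul σ (c + 1) hd) c hc) (c + 1) hd := by
    unfold Desc; rw [hm, k1, tmul_right σ (c + 1) hd, tmul_right _ c hc, k2, hm]; exact h1'
  have g1 := gen_desc hσ c hc h1
  have g2 := gen_desc g1 (c + 1) hd d1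
  have g3 := gen_desc g2 c hc d2
  have g4 := gen_desc hσ (c + 1) hd h2
  have g5 := gen_desc g4 c hc d3
  have l1 := msr_lt _ _ _ h1
  have l2 := msr_lt _ _ _ d1
  have l3 := msr_lt _ _ _ h2
  have l4 := msr_lt _ _ _ d3
  have H := hhex σ c hc hd hσ g1 g2 g3 g5 g4
  rw [ih _ g1 l1 _ hd d1, ih _ g2 (l2.trans l1) _ hc d2, ih _ g4 l3 _ hc d3,
    ih _ g5 (l4.trans l3) _ hd d4, ← tmul_braid]
  rw [edgeRect_tmul (tmul σ (c + 1) hd) c hc, edgeRect_tmul σ (c + 1) hd, tmul_braid,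
    edgeRect_tmul (tmul (tmul σ (c + 1) hd) c hc) (c + 1) hd] at H
  have s1 := pm_sq (hW (edgeRect (tmul (tmul σ (c + 1) hd) c hc) (c + 1) hd))
  have s2 := pm_sq (hW (edgeRect (tmul σ (c + 1) hd) c hc))
  have s3 := pm_sq (hW (edgeRect σ (c + 1) hd))
  generalize gaugeU W (tmul (tmul (tmul σ c hc) (c + 1) hd) c hc) = v at *
  generalize W (edgeRect (tmul (tmul σ (c + 1) hd) c hc) (c + 1) hd) = a4 at *
  generalize W (edgeRect (tmul σ (c + 1) hd) c hc) = a5 at *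
  generalize W (edgeRect σ (c + 1) hd) = a6 at *
  generalize W (edgeRect σ c hc) = a1 at *
  generalize W (edgeRect (tmul σ c hc) (c + 1) hd) = a2 at *
  generalize W (edgeRect (tmul (tmul σ c hc) (c + 1) hd) c hc) = a3 at *
  calc a1 * (a2 * (a3 * v)) = a1 * a2 * a3 * v * 1 * 1 * 1 := by ring
    _ = a1 * a2 * a3 * v * (a4 * a4) * (a5 * a5) * (a6 * a6) := by rw [s1, s2, s3]
    _ = (a1 * a2 * a3 * a4 * a5 * a6) * (a6 * (a5 * (a4 * v))) := by ring
    _ = _ := by rw [H, one_mul]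

/-- The square condition with product one. -/
def SqOne (m n : ℕ) (W : GridRect (m + n) → ℤ) : Prop :=
  ∀ (σ : Equiv.Perm (Fin (m + n))) (c d : ℕ) (hc : c + 1 < m + n) (hd : d + 1 < m + n),
    (c + 2 ≤ d ∨ d + 2 ≤ c) →
    σ ∈ GenSet m n → tmul σ c hc ∈ GenSet m n → tmul σ d hd ∈ GenSet m n →
    tmul (tmul σ c hc) d hd ∈ GenSet m n →
    W (edgeRect σ c hc) * W (edgeRect (tmul σ c hc) d hd) *
      W (edgeRect σ d hd) * W (edgeRect (tmul σ d hd) c hc) = 1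

theorem sq_agree {m n : ℕ} (W : GridRect (m + n) → ℤ) (hW : ∀ r, W r = 1 ∨ W r = -1)
    (hsq : SqOne m n W) (σ : Equiv.Perm (Fin (m + n))) (hσ : σ ∈ GenSet m n)
    (ih : ∀ ρ ∈ GenSet m n, msr ρ < msr σ → ∀ c (hc : c + 1 < m + n), Desc ρ c hc →
      gaugeU W ρ = W (edgeRect ρ c hc) * gaugeU W (tmul ρ c hc))
    (c d : ℕ) (hc : c + 1 < m + n) (hd : d + 1 < m + n) (hcd : c + 2 ≤ d ∨ d + 2 ≤ c)
    (h1 : Desc σ c hc) (h2 : Desc σ d hd) :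
    W (edgeRect σ c hc) * gaugeU W (tmul σ c hc) =
      W (edgeRect σ d hd) * gaugeU W (tmul σ d hd) := by
  have d1 : Desc (tmul σ c hc) d hd := desc_far hcd h2
  have d2 : Desc (tmul σ d hd) c hc := desc_far hcd.symm h1
  have g1 := gen_desc hσ c hc h1
  have g2 := gen_desc hσ d hd h2
  have g3 := gen_desc g1 d hd d1
  have H := hsq σ c d hc hd hcd hσ g1 g2 g3
  rw [ih _ g1 (msr_lt _ _ _ h1) _ hd d1, ih _ g2 (msr_lt _ _ _ h2) _ hc d2,
    tmul_comm σ c d hc hd hcd]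
  have s1 := pm_sq (hW (edgeRect (tmul σ d hd) c hc))
  have s2 := pm_sq (hW (edgeRect σ d hd))
  generalize gaugeU W (tmul (tmul σ d hd) c hc) = v at *
  generalize W (edgeRect (tmul σ d hd) c hc) = a4 at *
  generalize W (edgeRect σ d hd) = a3 at *
  generalize W (edgeRect σ c hc) = a1 at *
  generalize W (edgeRect (tmul σ c hc) d hd) = a2 at *
  calc a1 * (a2 * v) = a1 * a2 * v * 1 * 1 := by ring
    _ = a1 * a2 * v * (a4 * a4) * (a3 * a3) := by rw [s1, s2]
    _ = (a1 * a2 * a3 * a4) * (a3 * (a4 * v)) := by ring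
    _ = _ := by rw [H, one_mul]

theorem gaugeU_desc {m n : ℕ} (W : GridRect (m + n) → ℤ) (hW : ∀ r, W r = 1 ∨ W r = -1)
    (hsq : SqOne m n W) (hhex : HexCond m n W) (k : ℕ) :
    ∀ σ ∈ GenSet m n, msr σ < k → ∀ c (hc : c + 1 < m + n), Desc σ c hc →
      gaugeU W σ = W (edgeRect σ c hc) * gaugeU W (tmul σ c hc) := by
  induction k with
  | zero => intro σ _ h; omega
  | succ k ih =>
    intro σ hσ hk c hc h
    have ih' : ∀ ρ ∈ GenSet m n, msr ρ < msr σ → ∀ c (hc : c + 1 < m + n), Desc ρ c hc →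
      gaugeU W ρ = W (edgeRect ρ c hc) * gaugeU W (tmul ρ c hc) :=
      fun ρ hρ hl => ih ρ hρ (by omega)
    obtain ⟨d, hd, hdd, e⟩ := gaugeU_spec W σ ⟨c, hc, h⟩
    rw [e]
    by_cases h1 : d + 2 ≤ c ∨ c + 2 ≤ d
    · exact sq_agree W hW hsq σ hσ ih' d c hd hc h1 hdd h
    · have : c = d ∨ c = d + 1 ∨ d = c + 1 := by omega
      rcases this with rfl | rfl | rfl
      · rfl
      · exact hex_agree W hW hhex σ hσ ih' d hd hc hdd h
      · exact (hex_agree W hW hhex σ hσ ih' c hc hd h hdd).symm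

theorem edge_mem {m n : ℕ} {σ : Equiv.Perm (Fin (m + n))} {c : ℕ} {hc : c + 1 < m + n}
    (h1 : σ ∈ GenSet m n) (h2 : tmul σ c hc ∈ GenSet m n) : edgeRect σ c hc ∈ PTSet m n := by
  have hne : σ (colFin c hc) ≠ σ (colFin' c hc) := fun h => colNe c hc (σ.injective h)
  have hlt : colFin c hc < colFin' c hc := by simp [Fin.lt_def, colFin, colFin']
  unfold edgeRect
  split_ifs with h
  · exact ⟨⟨h1, h2⟩, ⟨hlt, h⟩, rfl⟩
  · refine ⟨⟨h2, ?_⟩, ⟨hlt, ?_⟩, rfl⟩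
    · have := tmul_tmul σ c hc
      rw [← this] at h1
      exact h1
    · change tmul σ c hc (colFin c hc) < tmul σ c hc (colFin' c hc)
      rw [tmul_left, tmul_right]
      exact lt_of_le_of_ne (not_lt.mp h) hne.symm

/-- There exists a `{1,−1}`-valued map on the planar thin rectangles in `F'` satisfying
(Sq) and (Hex), and any two such maps are gauge equivalent. -/
theorem planar_thin_sign_exists_unique (m n : ℕ) (hm : 1 ≤ m) (hn : 1 ≤ n) :
    (∃ S : GridRect (m + n) → ℤ,
      (∀ r ∈ PTSet m n, S r = 1 ∨ S r = -1) ∧ SqCond m n S ∧ HexCond m n S) ∧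
    (∀ S S' : GridRect (m + n) → ℤ,
      ((∀ r ∈ PTSet m n, S r = 1 ∨ S r = -1) ∧ SqCond m n S ∧ HexCond m n S) →
      ((∀ r ∈ PTSet m n, S' r = 1 ∨ S' r = -1) ∧ SqCond m n S' ∧ HexCond m n S') →
      GaugeEquiv (PTSet m n) S S') := by
  refine ⟨⟨sgnS, fun r _ => sgnS_pm r, sgnS_sq, sgnS_hex⟩, ?_⟩
  rintro S S' ⟨hS, hSq, hHex⟩ ⟨hS', hSq', hHex'⟩
  let W : GridRect (m + n) → ℤ := fun r => if S r * S' r = -1 then -1 else 1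
  have hW : ∀ r, W r = 1 ∨ W r = -1 := by
    intro r; simp only [W]; split_ifs <;> simp
  have hWe : ∀ r ∈ PTSet m n, W r = S r * S' r := by
    intro r hr
    simp only [W]
    rcases hS r hr with a | a <;> rcases hS' r hr with b | b <;> simp [a, b]
  have hsq : SqOne m n W := by
    intro σ c d hc hd hcd g g1 g2 g3
    have g4 : tmul (tmul σ d hd) c hc ∈ GenSet m n := by
      rw [← tmul_comm σ c d hc hd hcd]; exact g3
    have A := hSq σ c d hc hd hcd g g1 g2 g3
    have B := hSq' σ c d hc hd hcd g g1 g2 g3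
    rw [hWe _ (edge_mem g g1), hWe _ (edge_mem g1 g3), hWe _ (edge_mem g g2),
      hWe _ (edge_mem g2 g4)]
    linear_combination (S' (edgeRect σ c hc) * S' (edgeRect (tmul σ c hc) d hd) *
      S' (edgeRect σ d hd) * S' (edgeRect (tmul σ d hd) c hc)) * A - B
  have hhex : HexCond m n W := by
    intro σ c hc hd g g1 g2 g3 g4 g5
    have A := hHex σ c hc hd g g1 g2 g3 g4 g5
    have B := hHex' σ c hc hd g g1 g2 g3 g4 g5
    have g6 : tmul (tmul (tmul (tmul σ c hc) (c + 1) hd) c hc) (c + 1) hd ∈ GenSet m n := by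
      rw [tmul_braid, tmul_tmul]; exact g4
    have g7 : tmul (tmul (tmul σ (c + 1) hd) c hc) c hc ∈ GenSet m n := by
      rw [tmul_tmul]; exact g5
    have g8 : tmul (tmul σ (c + 1) hd) (c + 1) hd ∈ GenSet m n := by
      rw [tmul_tmul]; exact g
    rw [hWe _ (edge_mem g g1), hWe _ (edge_mem g1 g2), hWe _ (edge_mem g2 g3),
      hWe _ (edge_mem g3 g6), hWe _ (edge_mem g4 g7), hWe _ (edge_mem g5 g8)]
    linear_combination (S' (edgeRect σ c hc) * S' (edgeRect (tmul σ c hc) (c + 1) hd) *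
      S' (edgeRect (tmul (tmul σ c hc) (c + 1) hd) c hc) *
      S' (edgeRect (tmul (tmul (tmul σ c hc) (c + 1) hd) c hc) (c + 1) hd) *
      S' (edgeRect (tmul (tmul σ (c + 1) hd) c hc) c hc) *
      S' (edgeRect (tmul σ (c + 1) hd) (c + 1) hd)) * A + B
  have hu : ∀ σ, gaugeU W σ = 1 ∨ gaugeU W σ = -1 :=
    fun σ => gaugeU_pm W hW _ σ (Nat.lt_succ_self _)
  refine ⟨gaugeU W, hu, ?_⟩
  intro r hr
  have hWr := hWe r hr
  have hSr := pm_sq (hS r hr)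
  obtain ⟨σ, i, j, hij⟩ := r
  obtain ⟨⟨g1, g2⟩, ⟨hlt, hpl⟩, hthin⟩ := hr
  simp only [GridRect.Thin] at hthin
  simp only at hlt hpl g1
  have hc : (i : ℕ) + 1 < m + n := by rw [← hthin]; exact j.2
  have ei : i = colFin (i : ℕ) hc := rfl
  have ej : j = colFin' (i : ℕ) hc := Fin.ext hthin
  have hend : GridRect.endPerm ⟨σ, i, j, hij⟩ = tmul σ i hc := by
    simp only [GridRect.endPerm, tmul]; rw [← ei, ← ej]
  have hedge : edgeRect σ i hc = ⟨σ, i, j, hij⟩ := by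
    unfold edgeRect
    rw [if_pos (by rw [← ei, ← ej]; exact hpl)]
    simp only [← ei, ← ej]
  have hdesc : Desc (tmul σ i hc) i hc := by
    unfold Desc
    rw [tmul_left, tmul_right, ← ei, ← ej]; exact hpl
  rw [hend] at g2 ⊢
  have key := gaugeU_desc W hW hsq hhex _ _ g2 (Nat.lt_succ_self _) i hc hdesc
  rw [edgeRect_tmul, tmul_tmul, hedge, hWr] at key
  rw [key]
  have hus := pm_sq (hu σ)
  simp only
  generalize S ⟨σ, i, j, hij⟩ = a at *
  generalize S' ⟨σ, i, j, hij⟩ = b at *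
  generalize gaugeU W σ = v at *
  calc b = (v * v) * (a * a) * b := by rw [hus, hSr]; ring
    _ = _ := by ring
end

section
/- Let m, n ≥ 1 and set N = m + n. Suppose B is a map from the set of planar empty rectangles in F' to {1, −1} such that B(r) = 1 for every planar thin rectangle r in F', and such that B(r1)·B(r2) = B(r3)·B(r4) whenever (r1, r2) and (r3, r4) form a square all four of whose rectangles are planar, empty, and in F'. Then B(r) = 1 for every planar empty rectangle r in F'. -/
namespace GridRect

variable {N : ℕ}

/-- A planar rectangle is empty if no column strictly between `i` and `j` is sent strictly
between `σ(i)` and `σ(j)`. -/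
def IsEmptyRect (r : GridRect N) : Prop :=
  ¬ ∃ c : Fin N, r.i < c ∧ c < r.j ∧ r.perm r.i < r.perm c ∧ r.perm c < r.perm r.j

end GridRect

/-- The set of planar empty rectangles in `F'`. -/
def PESet (m n : ℕ) : Set (GridRect (m + n)) :=
  {r | r ∈ FSet m n ∧ r.Planar ∧ r.IsEmptyRect}


set_option linter.unusedSimpArgs false

lemma fin_cyc {N : ℕ} (a i j : Fin N) (h : i < j) : a - i < j - i ↔ i ≤ a ∧ a < j := by
  obtain ⟨a, ha⟩ := a
  obtain ⟨i, hi⟩ := i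
  obtain ⟨j, hj⟩ := j
  simp only [Fin.lt_def, Fin.le_def, Fin.sub_def] at *
  have e2 : (N - i + j) % N = j - i := by
    rw [show N - i + j = (j - i) + N by omega, Nat.add_mod_right, Nat.mod_eq_of_lt (by omega)]
  rw [e2]
  by_cases hia : i ≤ a
  · have e1 : (N - i + a) % N = a - i := by
      rw [show N - i + a = (a - i) + N by omega, Nat.add_mod_right, Nat.mod_eq_of_lt (by omega)]
    rw [e1]; omega
  · rw [Nat.mod_eq_of_lt (by omega)]; omega

lemma dom_planar {N : ℕ} (r : GridRect N) (h : r.Planar) (p : Fin N × Fin N) :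
    r.dom p = if ((r.i ≤ p.1 ∧ p.1 < r.j) ∧ (r.perm r.i ≤ p.2 ∧ p.2 < r.perm r.j))
      then 1 else 0 := by
  unfold GridRect.dom
  simp only [fin_cyc _ _ _ h.1, fin_cyc _ _ _ h.2]

lemma genSet_swap {m n : ℕ} {σ : Equiv.Perm (Fin (m + n))} (h : σ ∈ GenSet m n)
    (a b : Fin (m + n)) (hab : (a : ℕ) < m ↔ (b : ℕ) < m) :
    (Equiv.swap a b).trans σ ∈ GenSet m n := by
  intro c
  have ha := h a
  have hb := h b
  have hc := h c
  simp only [Equiv.trans_apply, Equiv.swap_apply_def]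
  split_ifs with h1 h2
  · subst h1; constructor <;> intro h3
    · exact hb.1 (hab.1 h3)
    · exact hb.2 (by omega)
  · subst h2; constructor <;> intro h3
    · exact ha.1 (hab.2 h3)
    · exact ha.2 (by omega)
  · exact hc

lemma thin_empty {N : ℕ} (r : GridRect N) (h : r.Thin) : r.IsEmptyRect := by
  rintro ⟨c, h1, h2, -⟩
  unfold GridRect.Thin at h
  rw [Fin.lt_def] at h1 h2
  omega


lemma sq1A {N : ℕ} (u : Equiv.Perm (Fin N)) (i k j : Fin N) (hik : i < k) (hkj : k < j)
    (h1 : u i < u j) (h2 : u j < u k) (n1 : i ≠ j) (n2 : i ≠ k) (n3 : i ≠ k) (n4 : k ≠ j) :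
    IsSquareOf ⟨u, i, j, n1⟩ ⟨(Equiv.swap i j).trans u, i, k, n2⟩
      ⟨u, i, k, n3⟩ ⟨(Equiv.swap i k).trans u, k, j, n4⟩ := by
  have hij := hik.trans hkj
  have q1 := hik.ne
  have q2 := hkj.ne
  have q3 := hij.ne
  have q1' := hik.ne'
  have q2' := hkj.ne'
  have q3' := hij.ne'
  have h3 := h1.trans h2
  refine ⟨?_, rfl, rfl, rfl, ?_, ?_, ?_⟩
  · intro H
    simp only [Prod.mk.injEq, GridRect.mk.injEq] at H
    grind
  · ext c
    simp only [GridRect.endPerm, Equiv.trans_apply, Equiv.swap_apply_def]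
    grind
  · intro H
    have e1 := congrArg (fun σ => σ i) H
    have e2 := congrArg (fun σ => σ k) H
    simp only [GridRect.endPerm, Equiv.trans_apply, Equiv.swap_apply_def] at e1 e2
    have e3 := u.injective e1
    have e4 := u.injective e2
    grind
  · rintro ⟨p, q⟩
    rw [dom_planar, dom_planar, dom_planar, dom_planar]
    · simp only [Equiv.trans_apply, Equiv.swap_apply_def, q1, q2, q3, q1', q2', q3', if_true, if_false]
      simp only [Fin.lt_def, Fin.le_def] at *
      split_ifs <;> omega
    all_goals
      simp only [GridRect.Planar, Equiv.trans_apply, Equiv.swap_apply_def, q1, q2, q3, q1', q2', q3', if_true, if_false]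
      constructor <;> assumption

lemma sq1B {N : ℕ} (u : Equiv.Perm (Fin N)) (i k j : Fin N) (hik : i < k) (hkj : k < j)
    (h1 : u i < u k) (h2 : u k < u j) (n1 : i ≠ k) (n2 : i ≠ j) (n3 : k ≠ j) (n4 : i ≠ k) :
    IsSquareOf ⟨u, i, k, n1⟩ ⟨(Equiv.swap i k).trans u, i, j, n2⟩
      ⟨u, k, j, n3⟩ ⟨(Equiv.swap k j).trans u, i, k, n4⟩ := by
  have hij := hik.trans hkj
  have q1 := hik.ne
  have q2 := hkj.ne
  have q3 := hij.ne
  have q1' := hik.ne'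
  have q2' := hkj.ne'
  have q3' := hij.ne'
  have h3 := h1.trans h2
  refine ⟨?_, rfl, rfl, rfl, ?_, ?_, ?_⟩
  · intro H
    simp only [Prod.mk.injEq, GridRect.mk.injEq] at H
    grind
  · ext c
    simp only [GridRect.endPerm, Equiv.trans_apply, Equiv.swap_apply_def]
    grind
  · intro H
    have e1 := congrArg (fun σ => σ i) H
    have e2 := congrArg (fun σ => σ k) H
    simp only [GridRect.endPerm, Equiv.trans_apply, Equiv.swap_apply_def] at e1 e2
    have e3 := u.injective e1
    have e4 := u.injective e2
    grind
  · rintro ⟨p, q⟩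
    rw [dom_planar, dom_planar, dom_planar, dom_planar]
    · simp only [Equiv.trans_apply, Equiv.swap_apply_def, q1, q2, q3, q1', q2', q3', if_true, if_false]
      simp only [Fin.lt_def, Fin.le_def] at *
      split_ifs <;> omega
    all_goals
      simp only [GridRect.Planar, Equiv.trans_apply, Equiv.swap_apply_def, q1, q2, q3, q1', q2', q3', if_true, if_false]
      constructor <;> assumption

lemma sq2A {N : ℕ} (u : Equiv.Perm (Fin N)) (i k j : Fin N) (hik : i < k) (hkj : k < j)
    (h1 : u k < u i) (h2 : u i < u j) (n1 : i ≠ j) (n2 : k ≠ j) (n3 : k ≠ j) (n4 : i ≠ k) :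
    IsSquareOf ⟨u, i, j, n1⟩ ⟨(Equiv.swap i j).trans u, k, j, n2⟩
      ⟨u, k, j, n3⟩ ⟨(Equiv.swap k j).trans u, i, k, n4⟩ := by
  have hij := hik.trans hkj
  have q1 := hik.ne
  have q2 := hkj.ne
  have q3 := hij.ne
  have q1' := hik.ne'
  have q2' := hkj.ne'
  have q3' := hij.ne'
  have h3 := h1.trans h2
  refine ⟨?_, rfl, rfl, rfl, ?_, ?_, ?_⟩
  · intro H
    simp only [Prod.mk.injEq, GridRect.mk.injEq] at H
    grind
  · ext c
    simp only [GridRect.endPerm, Equiv.trans_apply, Equiv.swap_apply_def]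
    grind
  · intro H
    have e1 := congrArg (fun σ => σ i) H
    have e2 := congrArg (fun σ => σ k) H
    simp only [GridRect.endPerm, Equiv.trans_apply, Equiv.swap_apply_def] at e1 e2
    have e3 := u.injective e1
    have e4 := u.injective e2
    grind
  · rintro ⟨p, q⟩
    rw [dom_planar, dom_planar, dom_planar, dom_planar]
    · simp only [Equiv.trans_apply, Equiv.swap_apply_def, q1, q2, q3, q1', q2', q3', if_true, if_false]
      simp only [Fin.lt_def, Fin.le_def] at *
      split_ifs <;> omega
    all_goals
      simp only [GridRect.Planar, Equiv.trans_apply, Equiv.swap_apply_def, q1, q2, q3, q1', q2', q3', if_true, if_false]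
      constructor <;> assumption

lemma sq2B {N : ℕ} (u : Equiv.Perm (Fin N)) (i k j : Fin N) (hik : i < k) (hkj : k < j)
    (h1 : u i < u k) (h2 : u k < u j) (n1 : k ≠ j) (n2 : i ≠ j) (n3 : i ≠ k) (n4 : k ≠ j) :
    IsSquareOf ⟨u, k, j, n1⟩ ⟨(Equiv.swap k j).trans u, i, j, n2⟩
      ⟨u, i, k, n3⟩ ⟨(Equiv.swap i k).trans u, k, j, n4⟩ := by
  have hij := hik.trans hkj
  have q1 := hik.ne
  have q2 := hkj.ne
  have q3 := hij.ne
  have q1' := hik.ne'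
  have q2' := hkj.ne'
  have q3' := hij.ne'
  have h3 := h1.trans h2
  refine ⟨?_, rfl, rfl, rfl, ?_, ?_, ?_⟩
  · intro H
    simp only [Prod.mk.injEq, GridRect.mk.injEq] at H
    grind
  · ext c
    simp only [GridRect.endPerm, Equiv.trans_apply, Equiv.swap_apply_def]
    grind
  · intro H
    have e1 := congrArg (fun σ => σ i) H
    have e2 := congrArg (fun σ => σ k) H
    simp only [GridRect.endPerm, Equiv.trans_apply, Equiv.swap_apply_def] at e1 e2
    have e3 := u.injective e1
    have e4 := u.injective e2
    grind
  · rintro ⟨p, q⟩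
    rw [dom_planar, dom_planar, dom_planar, dom_planar]
    · simp only [Equiv.trans_apply, Equiv.swap_apply_def, q1, q2, q3, q1', q2', q3', if_true, if_false]
      simp only [Fin.lt_def, Fin.le_def] at *
      split_ifs <;> omega
    all_goals
      simp only [GridRect.Planar, Equiv.trans_apply, Equiv.swap_apply_def, q1, q2, q3, q1', q2', q3', if_true, if_false]
      constructor <;> assumption

/-- If `B` is a `{1,−1}`-valued map on the planar empty rectangles in `F'` which equals `1`
on every planar thin rectangle in `F'`, and satisfies `B(r1)·B(r2) = B(r3)·B(r4)` whenever
`(r1,r2)` and `(r3,r4)` form a square all four of whose rectangles are planar, empty, and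
in `F'`, then `B` equals `1` on every planar empty rectangle in `F'`. -/
theorem comparison_function_is_one (m n : ℕ) (hm : 1 ≤ m) (hn : 1 ≤ n)
    (B : GridRect (m + n) → ℤ)
    (hval : ∀ r ∈ PESet m n, B r = 1 ∨ B r = -1)
    (hthin : ∀ r ∈ PTSet m n, B r = 1)
    (hsq : ∀ r1 r2 r3 r4 : GridRect (m + n), IsSquareOf r1 r2 r3 r4 →
      r1 ∈ PESet m n → r2 ∈ PESet m n → r3 ∈ PESet m n → r4 ∈ PESet m n →
      B r1 * B r2 = B r3 * B r4) :
    ∀ r ∈ PESet m n, B r = 1 := by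
  have thinPE : ∀ r, r ∈ PTSet m n → r ∈ PESet m n := fun r h => ⟨h.1, h.2.1, thin_empty r h.2.2⟩
  have key : ∀ d : ℕ, ∀ (x : Equiv.Perm (Fin (m + n))) (i j : Fin (m + n)) (hij : i ≠ j),
      (j : ℕ) - i = d → (⟨x, i, j, hij⟩ : GridRect (m + n)) ∈ PESet m n →
      B ⟨x, i, j, hij⟩ = 1 := by
    intro d
    induction d using Nat.strong_induction_on with
    | _ d ih =>
    intro x i j hij hd hr
    have hr0 := hr
    obtain ⟨⟨hx, hy⟩, ⟨hlt, hxlt⟩, hemp⟩ := hr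
    simp only [GridRect.endPerm] at hy hlt hxlt
    by_cases ht : (j : ℕ) = i + 1
    · exact hthin _ ⟨⟨hx, hy⟩, ⟨hlt, hxlt⟩, ht⟩
    have hltn : (i : ℕ) < j := hlt
    have hemp' : ∀ c, i < c → c < j → x c < x i ∨ x j < x c := by
      intro c h1 h2
      by_contra hcon
      push Not at hcon
      refine hemp ⟨c, h1, h2, lt_of_le_of_ne hcon.1 ?_, lt_of_le_of_ne hcon.2 ?_⟩
      · intro h; exact h1.ne (x.injective h)
      · intro h; exact h2.ne (x.injective h)
    by_cases hside : (i : ℕ) + 1 < m ∨ m ≤ (i : ℕ)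
    · obtain ⟨k, hk⟩ : ∃ k : Fin (m + n), (k : ℕ) = i + 1 := ⟨⟨i + 1, by omega⟩, rfl⟩
      have hik : i < k := by rw [Fin.lt_def]; omega
      have hkj : k < j := by rw [Fin.lt_def]; omega
      have hs : (i : ℕ) < m ↔ (k : ℕ) < m := by omega
      have hxs := genSet_swap hx i k hs
      have hys := genSet_swap hy i k hs
      rcases hemp' k hik hkj with hc | hc
      · have q1 := hik.ne
        have q2 := hkj.ne
        have q3 := hlt.ne
        have q1' := hik.ne'
        have q2' := hkj.ne'
        have q3' := hlt.ne'
        obtain ⟨w, hw⟩ : ∃ w, w = (Equiv.swap i k).trans x := ⟨_, rfl⟩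
        have hwx : (Equiv.swap i k).trans w = x := by
          subst hw
          ext z
          simp
        have Z : (Equiv.swap k j).trans w = (Equiv.swap i k).trans ((Equiv.swap i j).trans x) := by
          subst hw
          ext z
          simp only [Equiv.trans_apply, Equiv.swap_apply_def]
          grind
        have Z2 : (Equiv.swap i k).trans ((Equiv.swap k j).trans w) = (Equiv.swap i j).trans x := by
          rw [Z]; ext z; simp
        have wi : w i = x (k) := by
          rw [hw]; simp only [Equiv.trans_apply, Equiv.swap_apply_def]; grind
        have wk : w k = x (i) := by
          rw [hw]; simp only [Equiv.trans_apply, Equiv.swap_apply_def]; grind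
        have wj : w j = x (j) := by
          rw [hw]; simp only [Equiv.trans_apply, Equiv.swap_apply_def]; grind
        have w1 : w i < w k := by rw [wi, wk]; assumption
        have w2 : w k < w j := by rw [wk, wj]; assumption
        have hwS : w ∈ GenSet m n := hw ▸ hxs
        have hzS : (Equiv.swap k j).trans w ∈ GenSet m n := Z ▸ hys
        have m1 : (⟨w, i, k, by assumption⟩ : GridRect (m + n)) ∈ PTSet m n :=
          ⟨⟨hwS, by simp only [GridRect.endPerm]; rw [hwx]; exact hx⟩, ⟨by assumption, by assumption⟩, by simp only [GridRect.Thin]; omega⟩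
        have m3 : (⟨w, k, j, by assumption⟩ : GridRect (m + n)) ∈ PESet m n :=
          ⟨⟨hwS, hzS⟩, ⟨by assumption, by assumption⟩, by
          rintro ⟨c, c1, c2, c3, c4⟩
          simp only [hw, Equiv.trans_apply, Equiv.swap_apply_def] at c1 c2 c3 c4
          have := hemp' c (by first | exact c1 | exact hik.trans c1) (by first | exact c2 | exact c2.trans hkj)
          grind⟩
        have m4 : (⟨(Equiv.swap k j).trans w, i, k, by assumption⟩ : GridRect (m + n)) ∈ PTSet m n :=
          ⟨⟨hzS, by simp only [GridRect.endPerm]; rw [Z2]; exact hy⟩, ⟨by assumption, by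
          simp only [Equiv.trans_apply, Equiv.swap_apply_def, q1, q2, q3, q1', q2', q3', if_true, if_false]
          first | assumption | exact w1.trans w2⟩, by simp only [GridRect.Thin]; omega⟩
        have S := hsq _ _ _ _ (sq1B w i k j hik hkj w1 w2 (by assumption) (by assumption) (by assumption) (by assumption))
          (thinPE _ m1) (by rw [hwx]; exact hr0) m3 (thinPE _ m4)
        rw [hthin _ m1, hthin _ m4, ih _ (by omega) _ _ _ _ rfl m3] at S
        simpa [hwx] using S
      · have q1 := hik.ne
        have q2 := hkj.ne
        have q3 := hlt.ne
        have q1' := hik.ne'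
        have q2' := hkj.ne'
        have q3' := hlt.ne'
        have Z : (Equiv.swap k j).trans ((Equiv.swap i k).trans x) = (Equiv.swap i k).trans ((Equiv.swap i j).trans x) := by
          ext z
          simp only [Equiv.trans_apply, Equiv.swap_apply_def]
          grind
        have m2 : (⟨(Equiv.swap i j).trans x, i, k, by assumption⟩ : GridRect (m + n)) ∈ PTSet m n :=
          ⟨⟨hy, hys⟩, ⟨by assumption, by
          simp only [Equiv.trans_apply, Equiv.swap_apply_def, q1, q2, q3, q1', q2', q3', if_true, if_false]
          first | assumption | exact hc.trans hxlt | exact hxlt.trans hc⟩, by simp only [GridRect.Thin]; omega⟩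
        have m3 : (⟨x, i, k, by assumption⟩ : GridRect (m + n)) ∈ PTSet m n :=
          ⟨⟨hx, hxs⟩, ⟨by assumption, by
          simp only [Equiv.trans_apply, Equiv.swap_apply_def, q1, q2, q3, q1', q2', q3', if_true, if_false]
          first | assumption | exact hc.trans hxlt | exact hxlt.trans hc⟩, by simp only [GridRect.Thin]; omega⟩
        have m4 : (⟨(Equiv.swap i k).trans x, k, j, by assumption⟩ : GridRect (m + n)) ∈ PESet m n :=
          ⟨⟨hxs, by simp only [GridRect.endPerm]; rw [Z]; exact hys⟩, ⟨by assumption, by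
          simp only [Equiv.trans_apply, Equiv.swap_apply_def, q1, q2, q3, q1', q2', q3', if_true, if_false]
          first | assumption | exact hc.trans hxlt | exact hxlt.trans hc⟩, by
          rintro ⟨c, c1, c2, c3, c4⟩
          simp only [Equiv.trans_apply, Equiv.swap_apply_def] at c1 c2 c3 c4
          have := hemp' c (by first | exact c1 | exact hik.trans c1) (by first | exact c2 | exact c2.trans hkj)
          grind⟩
        have S := hsq _ _ _ _ (sq1A x i k j hik hkj (by assumption) (by assumption) hij (by assumption) (by assumption) (by assumption))
          hr0 (thinPE _ m2) (thinPE _ m3) m4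
        rw [hthin _ m2, hthin _ m3, ih _ (by omega) _ _ _ _ rfl m4] at S
        simpa using S
    · obtain ⟨k, hk⟩ : ∃ k : Fin (m + n), (k : ℕ) + 1 = j := ⟨⟨j - 1, by omega⟩, by simp; omega⟩
      have hik : i < k := by rw [Fin.lt_def]; omega
      have hkj : k < j := by rw [Fin.lt_def]; omega
      have hs : (k : ℕ) < m ↔ (j : ℕ) < m := by omega
      have hxs := genSet_swap hx k j hs
      have hys := genSet_swap hy k j hs
      rcases hemp' k hik hkj with hc | hc
      · have q1 := hik.ne
        have q2 := hkj.ne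
        have q3 := hlt.ne
        have q1' := hik.ne'
        have q2' := hkj.ne'
        have q3' := hlt.ne'
        have Z : (Equiv.swap i k).trans ((Equiv.swap k j).trans x) = (Equiv.swap k j).trans ((Equiv.swap i j).trans x) := by
          ext z
          simp only [Equiv.trans_apply, Equiv.swap_apply_def]
          grind
        have m2 : (⟨(Equiv.swap i j).trans x, k, j, by assumption⟩ : GridRect (m + n)) ∈ PTSet m n :=
          ⟨⟨hy, hys⟩, ⟨by assumption, by
          simp only [Equiv.trans_apply, Equiv.swap_apply_def, q1, q2, q3, q1', q2', q3', if_true, if_false]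
          first | assumption | exact hc.trans hxlt | exact hxlt.trans hc⟩, by simp only [GridRect.Thin]; omega⟩
        have m3 : (⟨x, k, j, by assumption⟩ : GridRect (m + n)) ∈ PTSet m n :=
          ⟨⟨hx, hxs⟩, ⟨by assumption, by
          simp only [Equiv.trans_apply, Equiv.swap_apply_def, q1, q2, q3, q1', q2', q3', if_true, if_false]
          first | assumption | exact hc.trans hxlt | exact hxlt.trans hc⟩, by simp only [GridRect.Thin]; omega⟩
        have m4 : (⟨(Equiv.swap k j).trans x, i, k, by assumption⟩ : GridRect (m + n)) ∈ PESet m n :=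
          ⟨⟨hxs, by simp only [GridRect.endPerm]; rw [Z]; exact hys⟩, ⟨by assumption, by
          simp only [Equiv.trans_apply, Equiv.swap_apply_def, q1, q2, q3, q1', q2', q3', if_true, if_false]
          first | assumption | exact hc.trans hxlt | exact hxlt.trans hc⟩, by
          rintro ⟨c, c1, c2, c3, c4⟩
          simp only [Equiv.trans_apply, Equiv.swap_apply_def] at c1 c2 c3 c4
          have := hemp' c (by first | exact c1 | exact hik.trans c1) (by first | exact c2 | exact c2.trans hkj)
          grind⟩
        have S := hsq _ _ _ _ (sq2A x i k j hik hkj (by assumption) (by assumption) hij (by assumption) (by assumption) (by assumption))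
          hr0 (thinPE _ m2) (thinPE _ m3) m4
        rw [hthin _ m2, hthin _ m3, ih _ (by omega) _ _ _ _ rfl m4] at S
        simpa using S
      · have q1 := hik.ne
        have q2 := hkj.ne
        have q3 := hlt.ne
        have q1' := hik.ne'
        have q2' := hkj.ne'
        have q3' := hlt.ne'
        obtain ⟨w, hw⟩ : ∃ w, w = (Equiv.swap k j).trans x := ⟨_, rfl⟩
        have hwx : (Equiv.swap k j).trans w = x := by
          subst hw
          ext z
          simp
        have Z : (Equiv.swap i k).trans w = (Equiv.swap k j).trans ((Equiv.swap i j).trans x) := by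
          subst hw
          ext z
          simp only [Equiv.trans_apply, Equiv.swap_apply_def]
          grind
        have Z2 : (Equiv.swap k j).trans ((Equiv.swap i k).trans w) = (Equiv.swap i j).trans x := by
          rw [Z]; ext z; simp
        have wi : w i = x (i) := by
          rw [hw]; simp only [Equiv.trans_apply, Equiv.swap_apply_def]; grind
        have wk : w k = x (j) := by
          rw [hw]; simp only [Equiv.trans_apply, Equiv.swap_apply_def]; grind
        have wj : w j = x (k) := by
          rw [hw]; simp only [Equiv.trans_apply, Equiv.swap_apply_def]; grind
        have w1 : w i < w k := by rw [wi, wk]; assumption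
        have w2 : w k < w j := by rw [wk, wj]; assumption
        have hwS : w ∈ GenSet m n := hw ▸ hxs
        have hzS : (Equiv.swap i k).trans w ∈ GenSet m n := Z ▸ hys
        have m1 : (⟨w, k, j, by assumption⟩ : GridRect (m + n)) ∈ PTSet m n :=
          ⟨⟨hwS, by simp only [GridRect.endPerm]; rw [hwx]; exact hx⟩, ⟨by assumption, by assumption⟩, by simp only [GridRect.Thin]; omega⟩
        have m3 : (⟨w, i, k, by assumption⟩ : GridRect (m + n)) ∈ PESet m n :=
          ⟨⟨hwS, hzS⟩, ⟨by assumption, by assumption⟩, by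
          rintro ⟨c, c1, c2, c3, c4⟩
          simp only [hw, Equiv.trans_apply, Equiv.swap_apply_def] at c1 c2 c3 c4
          have := hemp' c (by first | exact c1 | exact hik.trans c1) (by first | exact c2 | exact c2.trans hkj)
          grind⟩
        have m4 : (⟨(Equiv.swap i k).trans w, k, j, by assumption⟩ : GridRect (m + n)) ∈ PTSet m n :=
          ⟨⟨hzS, by simp only [GridRect.endPerm]; rw [Z2]; exact hy⟩, ⟨by assumption, by
          simp only [Equiv.trans_apply, Equiv.swap_apply_def, q1, q2, q3, q1', q2', q3', if_true, if_false]
          first | assumption | exact w1.trans w2⟩, by simp only [GridRect.Thin]; omega⟩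
        have S := hsq _ _ _ _ (sq2B w i k j hik hkj w1 w2 (by assumption) (by assumption) (by assumption) (by assumption))
          (thinPE _ m1) (by rw [hwx]; exact hr0) m3 (thinPE _ m4)
        rw [hthin _ m1, hthin _ m4, ih _ (by omega) _ _ _ _ rfl m3] at S
        simpa [hwx] using S
  rintro ⟨x, i, j, hij⟩ hr
  exact key _ x i j hij rfl hr
end
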